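/- arXiv:2406.00331 — 2 statements merged into one kernel-verified Lean document; each statement's English description precedes it below -/
import Mathlib

section
/- Fix a positive integer k. The sum Σ_{n ≥ -k} ℓ_{n,k}² is finite if and only if the integral (1/2π) ∫_{-∞}^{∞} |ζ(1/2 + it)|^{2k} / (1/4 + t²) dt is finite, and in that case the two quantities are equal. -/
open scoped Real Topology
open Complex Filter MeasureTheory Finset Asymptotics

/-- The analytic extension of `s ↦ ((s-1) * ζ(s))^k` to `s = 1` (where its value is `1`). -/
noncomputable def zetaPowAux (k : ℕ) : ℂ → ℂ :=
  Function.update (fun s : ℂ => ((s - 1) * riemannZeta s) ^ k) 1 1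

/-- `lam k j` is the Taylor coefficient `λ_{j,k}`, i.e. the `j`-th derivative at `s = 1` of the
analytic extension of `(s-1)^k ζ(s)^k`; these numbers are real, and we record their real part. -/
noncomputable def lam (k j : ℕ) : ℝ :=
  (iteratedDeriv j (zetaPowAux k) 1).re

/-- The Fourier coefficients `ℓ_{n,k}` for `n ≥ -k` (an integer index). -/
noncomputable def ell (k : ℕ) (n : ℤ) : ℝ :=
  if 1 ≤ n then
    (-1 : ℝ) ^ n.toNat *
      ∑ j ∈ Finset.Icc 1 n.toNat,
        ((n.toNat - 1).choose (j - 1) : ℝ) * lam k (j + k) / (Nat.factorial (j + k))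
  else
    (-1 : ℝ) ^ k *
      ∑ j ∈ Finset.range ((k + n).toNat + 1),
        ((k - j).choose (-n).toNat : ℝ) * (-1 : ℝ) ^ j * lam k j / (Nat.factorial j)

/-- The Lindelöf Hypothesis: `ζ(1/2 + it) = O(|t|^ε)` for every `ε > 0`. -/
def LindelofHypothesis : Prop :=
  ∀ ε : ℝ, 0 < ε → ∃ C : ℝ, ∀ t : ℝ, 1 ≤ |t| →
    ‖riemannZeta (1 / 2 + t * Complex.I)‖ ≤ C * |t| ^ ε

/-- `dk k n` is the Piltz divisor function `d_k(n)`: the number of representations of `n` as an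
ordered product of `k` positive integers (the `k`-th Dirichlet-convolution power of `ζ`). -/
noncomputable def dk (k n : ℕ) : ℕ := (ArithmeticFunction.zeta ^ k) n

/-- The coefficients `a_{j,k}` of the polynomial `P_k`. -/
noncomputable def aCoef (k j : ℕ) : ℝ :=
  (-1 : ℝ) ^ (k - 1 - j) *
    ∑ i ∈ Finset.range (k - 1 - j + 1), (-1 : ℝ) ^ i * lam k i / (Nat.factorial i)

/-- The error term `Δ_k(x) = (Σ_{1 ≤ n ≤ x} d_k(n)) - x P_k(log x)` in the Piltz divisor
problem. -/
noncomputable def Deltak (k : ℕ) (x : ℝ) : ℝ :=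
  (∑ n ∈ Finset.Icc 1 ⌊x⌋₊, (dk k n : ℝ)) -
    x * ∑ j ∈ Finset.range k, aCoef k j / (Nat.factorial j) * (Real.log x) ^ j

/-- The `n`-th Laguerre polynomial. -/
noncomputable def laguerre (n : ℕ) (u : ℝ) : ℝ :=
  ∑ j ∈ Finset.range (n + 1), (n.choose j : ℝ) * (-1 : ℝ) ^ j * u ^ j / (Nat.factorial j)

/-- The Bessel function of the first kind of order `0`. -/
noncomputable def besselJ0 (u : ℝ) : ℝ :=
  ∑' m : ℕ, (-1 : ℝ) ^ m * (u / 2) ^ (2 * m) / ((Nat.factorial m : ℝ) ^ 2)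

/-- `φ_k(x) = ∫_1^∞ Δ_k(r) J₀(2 √(x log r)) r⁻² dr`. -/
noncomputable def phik (k : ℕ) (x : ℝ) : ℝ :=
  ∫ r in Set.Ioi (1 : ℝ), Deltak k r * besselJ0 (2 * Real.sqrt (x * Real.log r)) / r ^ 2

/-- The `n`-th Taylor coefficient of `f` at `0`. -/
noncomputable def taylorCoeff (f : ℂ → ℂ) (n : ℕ) : ℂ :=
  iteratedDeriv n f 0 / (Nat.factorial n : ℂ)

lemma integral_circleMap_mul_exp_neg {f : ℂ → ℂ} {r : ℝ} (hr : 0 < r)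
    (hf : DifferentiableOn ℂ f (Metric.closedBall 0 r)) (n : ℕ) :
    ∫ θ in (0 : ℝ)..2 * π, Complex.exp (-(n * θ * I)) * f (circleMap 0 r θ) =
      2 * π * (taylorCoeff f n * r ^ n) := by
  have h := DifferentiableOn.circleIntegral_one_div_sub_center_pow_smul hr n hf
  have hr' : (r : ℂ) ≠ 0 := by exact_mod_cast hr.ne'
  have key : ∀ θ : ℝ, Complex.exp (-(n * θ * I)) * f (circleMap 0 r θ) =
      (r ^ n / I) * (deriv (circleMap 0 r) θ •
        ((1 / (circleMap 0 r θ - 0) ^ (n + 1)) • f (circleMap 0 r θ))) := by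
    intro θ
    rw [deriv_circleMap]
    simp only [circleMap, smul_eq_mul, zero_add, sub_zero]
    have he : Complex.exp (θ * I) ≠ 0 := Complex.exp_ne_zero _
    rw [Complex.exp_neg, mul_assoc, Complex.exp_nat_mul]
    field_simp
    ring
  simp_rw [key]
  rw [intervalIntegral.integral_const_mul]
  have h2 := h
  rw [circleIntegral] at h2
  rw [h2, taylorCoeff, smul_eq_mul]
  field_simp

lemma integral_circleMap_mul_exp_pos {f : ℂ → ℂ} {r : ℝ} (hr : 0 < r)
    (hf : DifferentiableOn ℂ f (Metric.closedBall 0 r)) (n : ℕ) :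
    ∫ θ in (0 : ℝ)..2 * π, Complex.exp ((n + 1) * θ * I) * f (circleMap 0 r θ) = 0 := by
  have hd : DifferentiableOn ℂ (fun z => z ^ n * f z) (Metric.closedBall 0 r) := by fun_prop
  have h := (hd.mono Metric.closure_ball_subset_closedBall).diffContOnCl.circleIntegral_eq_zero hr.le
  have hr' : (r : ℂ) ≠ 0 := by exact_mod_cast hr.ne'
  have key : ∀ θ : ℝ, Complex.exp ((n + 1) * θ * I) * f (circleMap 0 r θ) =
      (1 / (r ^ (n + 1) * I)) * (deriv (circleMap 0 r) θ •
        ((circleMap 0 r θ) ^ n * f (circleMap 0 r θ))) := by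
    intro θ
    rw [deriv_circleMap]
    simp only [circleMap, smul_eq_mul, zero_add]
    have he : Complex.exp ((n + 1) * θ * I) = Complex.exp (θ * I) ^ (n + 1) := by
      rw [← Complex.exp_nat_mul]; push_cast; ring_nf
    rw [he]
    field_simp
    ring
  simp_rw [key]
  rw [intervalIntegral.integral_const_mul]
  rw [circleIntegral] at h
  rw [h, mul_zero]

lemma hasSum_sq_norm_taylorCoeff {f : ℂ → ℂ} {r : ℝ} (hr : 0 < r)
    (hf : DifferentiableOn ℂ f (Metric.closedBall 0 r)) :
    HasSum (fun n : ℕ => (‖taylorCoeff f n‖ * r ^ n) ^ 2)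
      ((2 * π)⁻¹ * ∫ θ in (0 : ℝ)..2 * π, ‖f (circleMap 0 r θ)‖ ^ 2) := by
  have hc : Continuous fun θ : ℝ => f (circleMap 0 r θ) :=
    hf.continuousOn.comp_continuous (continuous_circleMap 0 r)
      (fun θ => circleMap_mem_closedBall 0 hr.le θ)
  have hL2 : MemLp (fun θ : ℝ => f (circleMap 0 r θ)) 2
      (volume.restrict (Set.Ioc 0 (2 * π))) := by
    obtain ⟨C, hC⟩ := (isCompact_closedBall (0 : ℂ) r).exists_bound_of_continuousOn hf.continuousOn
    exact MemLp.of_bound hc.aestronglyMeasurable C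
      (Eventually.of_forall fun θ => hC _ (circleMap_mem_closedBall 0 hr.le θ))
  have h := hasSum_sq_fourierCoeffOn Real.two_pi_pos hL2
  have hcoef : ∀ n : ℤ, fourierCoeffOn Real.two_pi_pos (fun θ : ℝ => f (circleMap 0 r θ)) n =
      (1 / (2 * π) : ℂ) * ∫ θ in (0 : ℝ)..2 * π,
        Complex.exp (-(n * θ * I)) * f (circleMap 0 r θ) := by
    intro n
    rw [fourierCoeffOn_eq_integral, Complex.real_smul]
    congr 1
    · simp
    · refine intervalIntegral.integral_congr fun θ _ => ?_
      have hpi : (π : ℂ) ≠ 0 := by exact_mod_cast Real.pi_ne_zero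
      simp only [fourier_coe_apply, smul_eq_mul]
      congr 2
      push_cast
      field_simp
      ring
  rw [← Function.Injective.hasSum_iff (g := fun n : ℕ => (n : ℤ)) Nat.cast_injective] at h
  · convert h using 1
    · ext n
      have hpi : (π : ℂ) ≠ 0 := by exact_mod_cast Real.pi_ne_zero
      simp only [Function.comp, hcoef, Int.cast_natCast]
      rw [integral_circleMap_mul_exp_neg hr hf n]
      rw [one_div, inv_mul_cancel_left₀ (by simp)]
      simp [abs_of_pos hr]
    · simp
  · intro n hn
    obtain ⟨m, rfl⟩ : ∃ m : ℕ, n = -(m + 1 : ℤ) := by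
      refine ⟨(-n - 1).toNat, ?_⟩
      have : n < 0 := by
        by_contra hcon
        exact hn ⟨n.toNat, by simp; omega⟩
      omega
    rw [hcoef]
    have := integral_circleMap_mul_exp_pos hr hf m
    have h2 : ∀ θ : ℝ, Complex.exp (-(((-(m + 1 : ℤ) : ℤ) : ℂ) * θ * I)) =
        Complex.exp ((m + 1) * θ * I) := by
      intro θ; push_cast; ring_nf
    simp_rw [h2]
    rw [this]; simp

/-- Parseval's identity on a circle, as an identity in `ℝ≥0∞`. -/
lemma lintegral_circleMap_sq {f : ℂ → ℂ} {r : ℝ} (hr : 0 < r)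
    (hf : DifferentiableOn ℂ f (Metric.closedBall 0 r)) :
    ∫⁻ θ in Set.Ioo 0 (2 * π), ‖f (circleMap 0 r θ)‖ₑ ^ 2 =
      ENNReal.ofReal (2 * π) * ∑' n : ℕ, ENNReal.ofReal ((‖taylorCoeff f n‖ * r ^ n) ^ 2) := by
  have hc : Continuous fun θ : ℝ => f (circleMap 0 r θ) :=
    hf.continuousOn.comp_continuous (continuous_circleMap 0 r)
      (fun θ => circleMap_mem_closedBall 0 hr.le θ)
  have h := hasSum_sq_norm_taylorCoeff hr hf
  rw [← ENNReal.ofReal_tsum_of_nonneg (fun n => by positivity) h.summable, h.tsum_eq,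
    ← ENNReal.ofReal_mul (by positivity), mul_inv_cancel_left₀ (by positivity),
    intervalIntegral.integral_of_le (by positivity), ← restrict_Ioo_eq_restrict_Ioc,
    ofReal_integral_eq_lintegral_ofReal]
  · refine lintegral_congr fun θ => ?_
    rw [ENNReal.ofReal_pow (norm_nonneg _), ofReal_norm]
  · exact ((hc.norm.pow 2).integrableOn_Icc (a := 0) (b := 2 * π)).mono_set Set.Ioo_subset_Icc_self
  · exact Eventually.of_forall fun θ => by positivity

/-- A sequence of radii in `(0, 1)` tending to `1`. -/
noncomputable def radius (n : ℕ) : ℝ := 1 - 1 / ((n : ℝ) + 2)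

lemma radius_pos (n : ℕ) : 0 < radius n := by
  have : 1 / ((n : ℝ) + 2) < 1 := by
    rw [div_lt_one (by positivity)]
    have : (0 : ℝ) ≤ n := n.cast_nonneg
    linarith
  unfold radius
  linarith

lemma radius_lt_one (n : ℕ) : radius n < 1 := by
  have : 0 < 1 / ((n : ℝ) + 2) := by positivity
  unfold radius
  linarith

lemma tendsto_radius : Tendsto radius atTop (𝓝 1) := by
  have h : Tendsto (fun n : ℕ => 1 / ((n : ℝ) + 2)) atTop (𝓝 0) := by
    simp_rw [one_div]
    exact (tendsto_atTop_add_const_right _ _ tendsto_natCast_atTop_atTop).inv_tendsto_atTop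
  change Tendsto (fun n : ℕ => 1 - 1 / ((n : ℝ) + 2)) atTop (𝓝 1)
  simpa using (tendsto_const_nhds (x := (1 : ℝ))).sub h

lemma circleMap_one_ne_one {θ : ℝ} (hθ : θ ∈ Set.Ioo 0 (2 * π)) : circleMap 0 1 θ ≠ 1 := by
  intro h
  simp only [circleMap, ofReal_one, one_mul, zero_add, Complex.exp_eq_one_iff] at h
  obtain ⟨n, hn⟩ := h
  have h1 : θ = n * (2 * π) := by
    have := congrArg Complex.im hn
    simpa using this
  have hp := Real.two_pi_pos
  have h2 : (0 : ℝ) < n := by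
    by_contra hcon
    push Not at hcon
    nlinarith [hθ.1]
  have h3 : (n : ℝ) < 1 := by
    by_contra hcon
    push Not at hcon
    nlinarith [hθ.2]
  have h4 : 0 < n := by exact_mod_cast h2
  have h5 : n < 1 := by exact_mod_cast h3
  omega

lemma tendsto_radius_circleMap {G : ℂ → ℂ} (hc : ∀ z : ℂ, ‖z‖ = 1 → z ≠ 1 → ContinuousAt G z)
    {θ : ℝ} (hθ : θ ∈ Set.Ioo 0 (2 * π)) :
    Tendsto (fun n => ‖G (circleMap 0 (radius n) θ)‖ₑ ^ 2) atTop
      (𝓝 (‖G (circleMap 0 1 θ)‖ₑ ^ 2)) := by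
  have h1 : Tendsto (fun n => circleMap 0 (radius n) θ) atTop (𝓝 (circleMap 0 1 θ)) := by
    have : Continuous fun r : ℝ => circleMap 0 r θ := by
      unfold circleMap; fun_prop
    exact (this.tendsto 1).comp tendsto_radius
  have h2 := (hc (circleMap 0 1 θ) (by simp) (circleMap_one_ne_one hθ)).tendsto.comp h1
  exact ENNReal.Tendsto.pow h2.enorm

lemma closedBall_subset_ball_one {r : ℝ} (hr : r < 1) :
    Metric.closedBall (0 : ℂ) r ⊆ Metric.ball 0 1 := Metric.closedBall_subset_ball hr

lemma measurable_enorm_circleMap {G : ℂ → ℂ} (hd : DifferentiableOn ℂ G (Metric.ball 0 1))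
    {r : ℝ} (hr : 0 < r) (hr1 : r < 1) :
    Measurable fun θ : ℝ => ‖G (circleMap 0 r θ)‖ₑ ^ 2 := by
  have hc : Continuous fun θ : ℝ => G (circleMap 0 r θ) :=
    hd.continuousOn.comp_continuous (continuous_circleMap 0 r)
      (fun θ => closedBall_subset_ball_one hr1 (circleMap_mem_closedBall 0 hr.le θ))
  exact (hc.measurable.enorm).pow_const 2

/-- The quadratic means of a holomorphic function on circles increase with the radius. -/
lemma lintegral_circleMap_mono {G : ℂ → ℂ} (hd : DifferentiableOn ℂ G (Metric.ball 0 1))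
    {r R : ℝ} (hr : 0 < r) (hrR : r ≤ R) (hR : R < 1) :
    ∫⁻ θ in Set.Ioo 0 (2 * π), ‖G (circleMap 0 r θ)‖ₑ ^ 2 ≤
      ∫⁻ θ in Set.Ioo 0 (2 * π), ‖G (circleMap 0 R θ)‖ₑ ^ 2 := by
  rw [lintegral_circleMap_sq hr (hd.mono (closedBall_subset_ball_one (hrR.trans_lt hR))),
    lintegral_circleMap_sq (hr.trans_le hrR) (hd.mono (closedBall_subset_ball_one hR))]
  gcongr

/-- One half of the boundary Parseval identity, from Fatou's lemma. -/
lemma lintegral_boundary_le {G : ℂ → ℂ} (hd : DifferentiableOn ℂ G (Metric.ball 0 1))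
    (hc : ∀ z : ℂ, ‖z‖ = 1 → z ≠ 1 → ContinuousAt G z) :
    ∫⁻ θ in Set.Ioo 0 (2 * π), ‖G (circleMap 0 1 θ)‖ₑ ^ 2 ≤
      ENNReal.ofReal (2 * π) * ∑' n : ℕ, ENNReal.ofReal (‖taylorCoeff G n‖ ^ 2) := by
  calc ∫⁻ θ in Set.Ioo 0 (2 * π), ‖G (circleMap 0 1 θ)‖ₑ ^ 2
      = ∫⁻ θ in Set.Ioo 0 (2 * π),
          liminf (fun n => ‖G (circleMap 0 (radius n) θ)‖ₑ ^ 2) atTop :=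
        setLIntegral_congr_fun measurableSet_Ioo
          fun θ hθ => (tendsto_radius_circleMap hc hθ).liminf_eq.symm
    _ ≤ liminf (fun n => ∫⁻ θ in Set.Ioo 0 (2 * π), ‖G (circleMap 0 (radius n) θ)‖ₑ ^ 2) atTop :=
        lintegral_liminf_le fun n =>
          measurable_enorm_circleMap hd (radius_pos n) (radius_lt_one n)
    _ ≤ _ := by
        refine liminf_le_of_le (by isBoundedDefault) fun b hb => ?_
        obtain ⟨n, hn⟩ := hb.exists
        refine hn.trans ?_
        rw [lintegral_circleMap_sq (radius_pos n)
          (hd.mono (closedBall_subset_ball_one (radius_lt_one n)))]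
        refine mul_le_mul_right (ENNReal.tsum_le_tsum fun m => ENNReal.ofReal_le_ofReal ?_) _
        have hm := (radius_pos n).le
        refine pow_le_pow_left₀ (by positivity) (mul_le_of_le_one_right (norm_nonneg _) ?_) 2
        exact pow_le_one₀ hm (radius_lt_one n).le

/-- Quadratic means of a bounded holomorphic function are dominated by the boundary mean. -/
lemma lintegral_circleMap_le_boundary_of_bounded {H : ℂ → ℂ} {C : ℝ}
    (hd : DifferentiableOn ℂ H (Metric.ball 0 1))
    (hc : ∀ z : ℂ, ‖z‖ = 1 → z ≠ 1 → ContinuousAt H z)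
    (hb : ∀ z ∈ Metric.ball (0 : ℂ) 1, ‖H z‖ ≤ C) {r : ℝ} (hr : 0 < r) (hr1 : r < 1) :
    ∫⁻ θ in Set.Ioo 0 (2 * π), ‖H (circleMap 0 r θ)‖ₑ ^ 2 ≤
      ∫⁻ θ in Set.Ioo 0 (2 * π), ‖H (circleMap 0 1 θ)‖ₑ ^ 2 := by
  have hlim : Tendsto (fun n => ∫⁻ θ in Set.Ioo 0 (2 * π), ‖H (circleMap 0 (radius n) θ)‖ₑ ^ 2)
      atTop (𝓝 (∫⁻ θ in Set.Ioo 0 (2 * π), ‖H (circleMap 0 1 θ)‖ₑ ^ 2)) := by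
    refine tendsto_lintegral_of_dominated_convergence (fun _ => ENNReal.ofReal C ^ 2)
      (fun n => measurable_enorm_circleMap hd (radius_pos n) (radius_lt_one n)) (fun n => ?_) ?_ ?_
    · refine Eventually.of_forall fun θ => ?_
      have := hb (circleMap 0 (radius n) θ)
        (closedBall_subset_ball_one (radius_lt_one n)
          (circleMap_mem_closedBall 0 (radius_pos n).le θ))
      simp only
      gcongr
      rw [← ofReal_norm]
      exact ENNReal.ofReal_le_ofReal this
    · simp [ENNReal.mul_eq_top]
    · filter_upwards [ae_restrict_mem measurableSet_Ioo] with θ hθ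
      exact tendsto_radius_circleMap hc hθ
  refine ge_of_tendsto hlim ?_
  filter_upwards [tendsto_radius.eventually (lt_mem_nhds hr1)] with n hn
  exact lintegral_circleMap_mono hd hr hn.le (radius_lt_one n)

lemma norm_one_sub_le_norm_one_add_sub {z : ℂ} (hz : ‖z‖ ≤ 1) {ε : ℝ} (hε : 0 < ε) :
    ‖1 - z‖ ≤ ‖1 + ε - z‖ := by
  have hre : z.re ≤ 1 := (Complex.re_le_norm z).trans hz
  rw [Complex.norm_def, Complex.norm_def]
  refine Real.sqrt_le_sqrt ?_
  simp only [Complex.normSq_apply, sub_re, sub_im, add_re, add_im, one_re, one_im, ofReal_re,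
    ofReal_im]
  nlinarith

lemma le_norm_one_add_sub {z : ℂ} (hz : ‖z‖ ≤ 1) (ε : ℝ) :
    ε ≤ ‖1 + ε - z‖ := by
  have hre : z.re ≤ 1 := (Complex.re_le_norm z).trans hz
  refine le_trans ?_ (Complex.re_le_norm _)
  simp
  linarith

/-- Quadratic means of a holomorphic function of polynomial growth at `1` are dominated by the
boundary mean. -/
lemma lintegral_circleMap_le_boundary {G : ℂ → ℂ} {C : ℝ} {k : ℕ}
    (hd : DifferentiableOn ℂ G (Metric.ball 0 1))
    (hc : ∀ z : ℂ, ‖z‖ = 1 → z ≠ 1 → ContinuousAt G z)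
    (hb : ∀ z ∈ Metric.ball (0 : ℂ) 1, ‖G z‖ * ‖1 - z‖ ^ k ≤ C)
    {r : ℝ} (hr : 0 < r) (hr1 : r < 1) :
    ∫⁻ θ in Set.Ioo 0 (2 * π), ‖G (circleMap 0 r θ)‖ₑ ^ 2 ≤
      ∫⁻ θ in Set.Ioo 0 (2 * π), ‖G (circleMap 0 1 θ)‖ₑ ^ 2 := by
  let ε : ℕ → ℝ := fun n => 1 / ((n : ℝ) + 1)
  have hε : ∀ n, 0 < ε n := fun n => by positivity
  have hε0 : Tendsto ε atTop (𝓝 0) := tendsto_one_div_add_atTop_nhds_zero_nat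
  let H : ℕ → ℂ → ℂ := fun n z => G z * ((1 - z) / (1 + ε n - z)) ^ k
  have hne : ∀ n (z : ℂ), ‖z‖ ≤ 1 → (1 + ε n - z : ℂ) ≠ 0 := fun n z hz =>
    norm_pos_iff.mp ((hε n).trans_le (le_norm_one_add_sub hz (ε n)))
  have hHd : ∀ n, DifferentiableOn ℂ (H n) (Metric.ball 0 1) := fun n =>
    hd.mul ((DifferentiableOn.div (by fun_prop) (by fun_prop)
      fun z hz => hne n z (mem_ball_zero_iff.mp hz).le).pow k)
  have hHc : ∀ n, ∀ z : ℂ, ‖z‖ = 1 → z ≠ 1 → ContinuousAt (H n) z := fun n z hz hz1 =>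
    (hc z hz hz1).mul ((ContinuousAt.div (by fun_prop) (by fun_prop) (hne n z hz.le)).pow k)
  have hHb : ∀ n, ∀ z ∈ Metric.ball (0 : ℂ) 1, ‖H n z‖ ≤ C / ε n ^ k := by
    intro n z hz
    have hz' := (mem_ball_zero_iff.mp hz).le
    have hC : 0 ≤ C := le_trans (by positivity) (hb z hz)
    simp only [H, norm_mul, norm_pow, norm_div, div_pow, ← mul_div_assoc]
    exact div_le_div₀ hC (hb z hz) (pow_pos (hε n) k)
      (pow_le_pow_left₀ (hε n).le (le_norm_one_add_sub hz' (ε n)) k)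
  have hHG : ∀ n (z : ℂ), ‖z‖ ≤ 1 → ‖H n z‖ₑ ≤ ‖G z‖ₑ := by
    intro n z hz
    rw [← ofReal_norm, ← ofReal_norm]
    refine ENNReal.ofReal_le_ofReal ?_
    simp only [H, norm_mul, norm_pow, norm_div]
    refine mul_le_of_le_one_right (norm_nonneg _) (pow_le_one₀ (by positivity) ?_)
    exact div_le_one_of_le₀ (norm_one_sub_le_norm_one_add_sub hz (hε n)) (norm_nonneg _)
  have hlim : ∀ z : ℂ, ‖z‖ < 1 → Tendsto (fun n => ‖H n z‖ₑ ^ 2) atTop (𝓝 (‖G z‖ₑ ^ 2)) := by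
    intro z hz
    have hz1 : (1 - z : ℂ) ≠ 0 := by
      intro h
      rw [← sub_eq_zero.mp h] at hz
      simp at hz
    have h1 : Tendsto (fun n => (1 - z) / (1 + ε n - z)) atTop (𝓝 ((1 - z) / (1 + (0 : ℝ) - z))) :=
      tendsto_const_nhds.div ((tendsto_const_nhds.add
        ((Complex.continuous_ofReal.tendsto 0).comp hε0)).sub tendsto_const_nhds) (by simpa using hz1)
    rw [ofReal_zero, add_zero, div_self hz1] at h1
    have h2 := (tendsto_const_nhds (x := G z)).mul (h1.pow k)
    rw [one_pow, mul_one] at h2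
    exact ENNReal.Tendsto.pow h2.enorm
  calc ∫⁻ θ in Set.Ioo 0 (2 * π), ‖G (circleMap 0 r θ)‖ₑ ^ 2
      = ∫⁻ θ in Set.Ioo 0 (2 * π), liminf (fun n => ‖H n (circleMap 0 r θ)‖ₑ ^ 2) atTop :=
        lintegral_congr fun θ => (hlim _ (by simpa [abs_of_pos hr] using hr1)).liminf_eq.symm
    _ ≤ liminf (fun n => ∫⁻ θ in Set.Ioo 0 (2 * π), ‖H n (circleMap 0 r θ)‖ₑ ^ 2) atTop :=
        lintegral_liminf_le fun n => measurable_enorm_circleMap (hHd n) hr hr1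
    _ ≤ _ := by
        refine liminf_le_of_le (by isBoundedDefault) fun b hb => ?_
        obtain ⟨n, hn⟩ := hb.exists
        refine hn.trans ((lintegral_circleMap_le_boundary_of_bounded (hHd n) (hHc n) (hHb n)
          hr hr1).trans ?_)
        gcongr
        exact hHG n _ (by simp)

/-- Parseval's identity for the boundary values of a holomorphic function on the unit disc with
polynomial growth at `1`, both sides being possibly infinite. -/
theorem lintegral_boundary_eq {G : ℂ → ℂ} {C : ℝ} {k : ℕ}
    (hd : DifferentiableOn ℂ G (Metric.ball 0 1))
    (hc : ∀ z : ℂ, ‖z‖ = 1 → z ≠ 1 → ContinuousAt G z)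
    (hb : ∀ z ∈ Metric.ball (0 : ℂ) 1, ‖G z‖ * ‖1 - z‖ ^ k ≤ C) :
    ∫⁻ θ in Set.Ioo 0 (2 * π), ‖G (circleMap 0 1 θ)‖ₑ ^ 2 =
      ENNReal.ofReal (2 * π) * ∑' n : ℕ, ENNReal.ofReal (‖taylorCoeff G n‖ ^ 2) := by
  refine le_antisymm (lintegral_boundary_le hd hc) ?_
  rw [ENNReal.tsum_eq_iSup_nat, ENNReal.mul_iSup]
  refine iSup_le fun N => ?_
  have hlim : Tendsto (fun m => ENNReal.ofReal (2 * π) *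
      ∑ n ∈ Finset.range N, ENNReal.ofReal ((‖taylorCoeff G n‖ * radius m ^ n) ^ 2)) atTop
      (𝓝 (ENNReal.ofReal (2 * π) *
        ∑ n ∈ Finset.range N, ENNReal.ofReal (‖taylorCoeff G n‖ ^ 2))) := by
    refine ENNReal.Tendsto.const_mul (tendsto_finsetSum _ fun n _ => ?_)
      (Or.inr ENNReal.ofReal_ne_top)
    refine ENNReal.tendsto_ofReal ?_
    simpa using ((tendsto_const_nhds (x := ‖taylorCoeff G n‖)).mul (tendsto_radius.pow n)).pow 2
  refine le_of_tendsto' hlim fun m => ?_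
  refine le_trans ?_ (lintegral_circleMap_le_boundary hd hc hb (radius_pos m) (radius_lt_one m))
  rw [lintegral_circleMap_sq (radius_pos m)
    (hd.mono (closedBall_subset_ball_one (radius_lt_one m)))]
  gcongr
  exact ENNReal.sum_le_tsum _

lemma zetaPowAux_eq {k : ℕ} : zetaPowAux k = fun s => riemannZeta₁ s ^ k := by
  ext s
  by_cases hs : s = 1
  · subst hs
    simp [zetaPowAux]
  · rw [zetaPowAux, Function.update_of_ne hs, riemannZeta_eq_inv_sub_mul hs,
      mul_inv_cancel_left₀ (sub_ne_zero.mpr hs)]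

lemma differentiable_zetaPowAux (k : ℕ) : Differentiable ℂ (zetaPowAux k) := by
  rw [zetaPowAux_eq]
  fun_prop

/-- The fractional part, cut off to `(1, ∞)`. -/
noncomputable def fractTail : ℝ → ℂ := Set.indicator (Set.Ioi 1) fun t => ((Int.fract t : ℝ) : ℂ)

lemma norm_fractTail_le (t : ℝ) : ‖fractTail t‖ ≤ 1 := by
  unfold fractTail
  refine (norm_indicator_le_norm_self _ _).trans ?_
  simp [abs_of_nonneg, (Int.fract_lt_one t).le]

lemma measurable_fractTail : Measurable fractTail :=
  (Complex.measurable_ofReal.comp measurable_fract).indicator measurableSet_Ioi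

lemma mellin_fractTail_eq (s : ℂ) :
    mellin fractTail (-s) = ∫ t in Set.Ioi (1 : ℝ), ((Int.fract t : ℝ) : ℂ) * (t : ℂ) ^ (-(s + 1)) := by
  rw [mellin, ← Set.inter_eq_self_of_subset_right (Set.Ioi_subset_Ioi zero_le_one),
    ← setIntegral_indicator measurableSet_Ioi]
  refine integral_congr_ae (Eventually.of_forall fun t => ?_)
  by_cases ht : t ∈ Set.Ioi (1 : ℝ)
  · simp only [fractTail, Set.indicator_of_mem ht, smul_eq_mul]
    rw [mul_comm]
    congr 2
    ring
  · simp [fractTail, Set.indicator_of_notMem ht]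

lemma integrableOn_fract_mul_cpow {s : ℂ} (hs : 0 < s.re) :
    IntegrableOn (fun t : ℝ => ((Int.fract t : ℝ) : ℂ) * (t : ℂ) ^ (-(s + 1))) (Set.Ioi 1) := by
  refine Integrable.bdd_mul (c := 1) (integrableOn_Ioi_cpow_of_lt ?_ zero_lt_one) ?_ ?_
  · simp; linarith
  · exact (Complex.measurable_ofReal.comp measurable_fract).aestronglyMeasurable
  · exact Eventually.of_forall fun t => by simp [abs_of_nonneg, (Int.fract_lt_one t).le]

lemma norm_mellin_fractTail_le {s : ℂ} (hs : 0 < s.re) :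
    ‖mellin fractTail (-s)‖ ≤ 1 / s.re := by
  have hlt : -(s.re + 1) < -1 := by linarith
  rw [mellin_fractTail_eq]
  have hval : ∫ t in Set.Ioi (1 : ℝ), t ^ (-(s.re + 1)) = 1 / s.re := by
    rw [integral_Ioi_rpow_of_lt hlt zero_lt_one, Real.one_rpow]
    have h2 : -(s.re + 1) + 1 = -s.re := by ring
    rw [h2, neg_div_neg_eq]
  rw [← hval]
  refine norm_integral_le_of_norm_le (integrableOn_Ioi_rpow_of_lt hlt zero_lt_one) ?_
  filter_upwards [ae_restrict_mem measurableSet_Ioi] with t ht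
  have ht0 : 0 < t := zero_lt_one.trans ht
  rw [norm_mul, Complex.norm_cpow_eq_rpow_re_of_pos ht0]
  refine mul_le_of_le_one_left ?_ ?_ |>.trans_eq ?_
  · positivity
  · simp [abs_of_nonneg, (Int.fract_lt_one t).le]
  · simp

lemma differentiableAt_mellin_fractTail {s : ℂ} (hs : 0 < s.re) :
    DifferentiableAt ℂ (fun s => mellin fractTail (-s)) s := by
  have h : DifferentiableAt ℂ (mellin fractTail) (-s) := by
    refine mellin_differentiableAt_of_isBigO_rpow (a := 0) (b := -s.re - 1) ?_ ?_ ?_ ?_ ?_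
    · refine LocallyIntegrable.locallyIntegrableOn ?_ _
      refine (locallyIntegrable_const (1 : ℝ)).mono measurable_fractTail.aestronglyMeasurable ?_
      exact Eventually.of_forall fun t => by simpa using norm_fractTail_le t
    · refine IsBigO.of_bound 1 (Eventually.of_forall fun t => ?_)
      simpa using norm_fractTail_le t
    · simpa using hs
    · refine IsBigO.of_bound 1 ?_
      filter_upwards [Ioo_mem_nhdsGT (zero_lt_one (α := ℝ))] with t ht
      rw [fractTail, Set.indicator_of_notMem (by simpa using ht.2.le)]
      simp only [norm_zero]
      positivity
    · simp
  exact h.comp s differentiableAt_id.neg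

lemma riemannZeta₁_eq_of_one_lt_re {s : ℂ} (hs : 1 < s.re) :
    riemannZeta₁ s = s - (s - 1) * s * mellin fractTail (-s) := by
  have hs1 : s ≠ 1 := by rintro rfl; simp at hs
  have hs1' : s - 1 ≠ 0 := sub_ne_zero.mpr hs1
  have hO : (fun n : ℕ => ∑ k ∈ Finset.Icc 1 n, ‖(1 : ℕ → ℂ) k‖) =O[atTop]
      fun n : ℕ => (n : ℝ) ^ (1 : ℝ) := by
    simpa using isBigO_refl _ _
  have h := LSeries_eq_mul_integral' 1 zero_le_one hs hO
  rw [LSeries_one_eq_riemannZeta hs] at h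
  have hIntegral : ∫ t in Set.Ioi (1 : ℝ), (∑ k ∈ Finset.Icc 1 ⌊t⌋₊, (1 : ℕ → ℂ) k) *
      (t : ℂ) ^ (-(s + 1)) = 1 / (s - 1) - mellin fractTail (-s) := by
    have hcp : ∫ t in Set.Ioi (1 : ℝ), (t : ℂ) ^ (-s) = 1 / (s - 1) := by
      rw [integral_Ioi_cpow_of_lt (by simpa using hs) zero_lt_one]
      have : -s + 1 = -(s - 1) := by ring
      rw [this, ofReal_one, one_cpow, neg_div_neg_eq]
    rw [← hcp, mellin_fractTail_eq, ← integral_sub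
      (integrableOn_Ioi_cpow_of_lt (by simpa using hs) zero_lt_one)
      (integrableOn_fract_mul_cpow (zero_lt_one.trans hs))]
    refine setIntegral_congr_fun measurableSet_Ioi fun t ht => ?_
    have ht0 : (0 : ℝ) < t := zero_lt_one.trans ht
    have ht0' : (t : ℂ) ≠ 0 := by exact_mod_cast ht0.ne'
    have hfl : ((⌊t⌋₊ : ℝ) : ℂ) = (t : ℂ) - ((Int.fract t : ℝ) : ℂ) := by
      rw [natCast_floor_eq_intCast_floor ht0.le, ← ofReal_sub, Int.self_sub_fract]
    have hpow : (t : ℂ) ^ (-s) = t * (t : ℂ) ^ (-(s + 1)) := by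
      rw [show -s = 1 + -(s + 1) by ring, cpow_add _ _ ht0', cpow_one]
    simp only [Pi.one_apply, Finset.sum_const, Nat.card_Icc, add_tsub_cancel_right, nsmul_eq_mul,
      mul_one]
    rw [hpow, ← sub_mul, ← hfl, ofReal_natCast]
  rw [hIntegral, riemannZeta_eq_inv_sub_mul hs1] at h
  field_simp at h
  linear_combination h

lemma riemannZeta₁_eq {s : ℂ} (hs : 0 < s.re) :
    riemannZeta₁ s = s - (s - 1) * s * mellin fractTail (-s) := by
  have hopen : IsOpen {s : ℂ | 0 < s.re} := isOpen_lt continuous_const Complex.continuous_re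
  have hf : AnalyticOnNhd ℂ riemannZeta₁ {s : ℂ | 0 < s.re} :=
    differentiable_riemannZeta₁.differentiableOn.analyticOnNhd hopen
  have hg : AnalyticOnNhd ℂ (fun s => s - (s - 1) * s * mellin fractTail (-s))
      {s : ℂ | 0 < s.re} := by
    refine DifferentiableOn.analyticOnNhd (fun s hs => ?_) hopen
    have := differentiableAt_mellin_fractTail hs
    exact DifferentiableAt.differentiableWithinAt (by fun_prop)
  have hev : riemannZeta₁ =ᶠ[𝓝 2] fun s => s - (s - 1) * s * mellin fractTail (-s) := by
    have : {s : ℂ | 1 < s.re} ∈ 𝓝 (2 : ℂ) :=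
      (isOpen_lt continuous_const Complex.continuous_re).mem_nhds (by simp)
    filter_upwards [this] with s hs using riemannZeta₁_eq_of_one_lt_re hs
  exact hf.eqOn_of_preconnected_of_eventuallyEq hg
    (convex_halfSpace_re_gt 0).isPreconnected (by simp) hev hs

lemma norm_riemannZeta₁_le {s : ℂ} (hs : 1 / 2 < s.re) :
    ‖riemannZeta₁ s‖ ≤ ‖s‖ * (1 + 2 * ‖s - 1‖) := by
  have hpos : 0 < s.re := by linarith
  rw [riemannZeta₁_eq hpos]
  have h2 : ‖mellin fractTail (-s)‖ ≤ 2 := by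
    refine (norm_mellin_fractTail_le hpos).trans ?_
    rw [div_le_iff₀ hpos]
    linarith
  calc ‖s - (s - 1) * s * mellin fractTail (-s)‖
      ≤ ‖s‖ + ‖s - 1‖ * ‖s‖ * ‖mellin fractTail (-s)‖ := by
        simpa [norm_mul] using norm_sub_le s ((s - 1) * s * mellin fractTail (-s))
    _ ≤ ‖s‖ + ‖s - 1‖ * ‖s‖ * 2 := by gcongr
    _ = _ := by ring

/-- `f` is the sum of the power series with coefficients `a` near `0`. -/
def HasCoeffs (f : ℂ → ℂ) (a : ℕ → ℂ) : Prop :=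
  ∀ᶠ z in 𝓝 (0 : ℂ), HasSum (fun n => z ^ n * a n) (f z)

lemma iteratedDeriv_div_factorial_eq_coeff {f : ℂ → ℂ} {c : ℂ}
    {p : FormalMultilinearSeries ℂ ℂ ℂ} (h : HasFPowerSeriesAt f p c) (n : ℕ) :
    iteratedDeriv n f c / (Nat.factorial n : ℂ) = p.coeff n := by
  obtain ⟨r, hr⟩ := h
  have h1 := hr.factorial_smul 1 n
  rw [iteratedDeriv_eq_iteratedFDeriv, ← h1, nsmul_eq_mul,
    mul_div_cancel_left₀ _ (by exact_mod_cast Nat.factorial_ne_zero n)]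
  rfl

lemma HasCoeffs.taylorCoeff_eq {f : ℂ → ℂ} {a : ℕ → ℂ} (h : HasCoeffs f a) (n : ℕ) :
    taylorCoeff f n = a n := by
  have hp : HasFPowerSeriesAt f (FormalMultilinearSeries.ofScalars ℂ a) 0 := by
    rw [hasFPowerSeriesAt_iff]
    simpa [HasCoeffs] using h
  rw [taylorCoeff, iteratedDeriv_div_factorial_eq_coeff hp]
  simp

lemma AnalyticAt.exists_hasCoeffs {f : ℂ → ℂ} (hf : AnalyticAt ℂ f 0) :
    ∃ a, HasCoeffs f a := by
  obtain ⟨p, hp⟩ := hf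
  rw [hasFPowerSeriesAt_iff] at hp
  exact ⟨p.coeff, by simpa [HasCoeffs] using hp⟩

lemma HasCoeffs.add {f g : ℂ → ℂ} {a b : ℕ → ℂ} (hf : HasCoeffs f a) (hg : HasCoeffs g b) :
    HasCoeffs (fun z => f z + g z) (fun n => a n + b n) := by
  filter_upwards [hf, hg] with z h1 h2
  simpa [mul_add] using h1.add h2

lemma HasCoeffs.const_mul {f : ℂ → ℂ} {a : ℕ → ℂ} (c : ℂ) (hf : HasCoeffs f a) :
    HasCoeffs (fun z => c * f z) (fun n => c * a n) := by
  filter_upwards [hf] with z h1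
  simpa [mul_left_comm] using h1.mul_left c

lemma HasCoeffs.sum {ι : Type*} {s : Finset ι} {f : ι → ℂ → ℂ} {a : ι → ℕ → ℂ}
    (h : ∀ i ∈ s, HasCoeffs (f i) (a i)) :
    HasCoeffs (fun z => ∑ i ∈ s, f i z) (fun n => ∑ i ∈ s, a i n) := by
  have h' := (Filter.eventually_all_finset s).mpr h
  filter_upwards [h'] with z hz
  simpa [Finset.mul_sum] using hasSum_sum hz

lemma HasCoeffs.pow_mul {f : ℂ → ℂ} {a : ℕ → ℂ} (hf : HasCoeffs f a) (j : ℕ) :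
    HasCoeffs (fun z => z ^ j * f z) (fun n => if j ≤ n then a (n - j) else 0) := by
  filter_upwards [hf] with z hz
  rw [← Function.Injective.hasSum_iff (g := fun n : ℕ => n + j) (add_left_injective j)]
  · have h : (fun n => z ^ n * if j ≤ n then a (n - j) else 0) ∘ (fun n : ℕ => n + j) =
        fun n => z ^ j * (z ^ n * a n) := by
      ext n
      simp only [Function.comp_apply, le_add_iff_nonneg_left, zero_le, if_true,
        Nat.add_sub_cancel, pow_add]
      ring
    rw [h]
    exact hz.mul_left (z ^ j)
  · intro n hn
    have : ¬ j ≤ n := fun hle => hn ⟨n - j, by simp; omega⟩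
    simp [this]

lemma hasCoeffs_one_sub_pow (p : ℕ) :
    HasCoeffs (fun z => (1 - z) ^ p) (fun n => (-1) ^ n * (p.choose n : ℂ)) := by
  refine Eventually.of_forall fun z => ?_
  have h : (1 - z) ^ p = ∑ n ∈ Finset.range (p + 1), z ^ n * ((-1) ^ n * (p.choose n : ℂ)) := by
    rw [sub_eq_neg_add, add_pow]
    refine Finset.sum_congr rfl fun n _ => ?_
    rw [neg_pow]
    simp
    ring
  change HasSum _ ((1 - z) ^ p)
  rw [h]
  refine hasSum_sum_of_ne_finset_zero fun n hn => ?_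
  simp [Nat.choose_eq_zero_of_lt (show p < n by simpa using hn)]

lemma hasCoeffs_inv_one_sub_pow (p : ℕ) :
    HasCoeffs (fun z => 1 / (1 - z) ^ (p + 1)) (fun n => ((n + p).choose p : ℂ)) := by
  filter_upwards [Metric.ball_mem_nhds (0 : ℂ) one_pos] with z hz
  simpa [mul_comm] using
    hasSum_choose_mul_geometric_of_norm_lt_one p (mem_ball_zero_iff.mp hz)

lemma eventually_ne_one : ∀ᶠ z in 𝓝 (0 : ℂ), 1 - z ≠ 0 := by
  filter_upwards [isOpen_ne.mem_nhds (zero_ne_one (α := ℂ))] with z hz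
  exact sub_ne_zero.mpr (Ne.symm hz)

/-- The coefficients of `(z / (1 - z)) ^ j * (1 - z) ^ k`. -/
noncomputable def moebiusCoeff (k j m : ℕ) : ℂ :=
  if j ≤ m then
    if j ≤ k then (-1) ^ (m - j) * ((k - j).choose (m - j) : ℂ)
    else ((m - k - 1).choose (j - k - 1) : ℂ)
  else 0

lemma hasCoeffs_moebius (k j : ℕ) :
    HasCoeffs (fun z => (z / (1 - z)) ^ j * (1 - z) ^ k) (moebiusCoeff k j) := by
  by_cases hjk : j ≤ k
  · have h := (hasCoeffs_one_sub_pow (k - j)).pow_mul j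
    have hc : moebiusCoeff k j = fun n => if j ≤ n then
        (-1) ^ (n - j) * ((k - j).choose (n - j) : ℂ) else 0 := by
      ext n; simp [moebiusCoeff, hjk]
    rw [hc]
    filter_upwards [h, eventually_ne_one] with z hz hz1
    convert hz using 1
    rw [div_pow, ← Nat.sub_add_cancel hjk, pow_add, Nat.add_sub_cancel]
    field_simp
  · have h := (hasCoeffs_inv_one_sub_pow (j - k - 1)).pow_mul j
    have hc : moebiusCoeff k j = fun n => if j ≤ n then
        ((n - j + (j - k - 1)).choose (j - k - 1) : ℂ) else 0 := by
      ext n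
      by_cases hn : j ≤ n
      · simp only [moebiusCoeff, hjk, hn, if_true, if_false]
        congr 2
        omega
      · simp [moebiusCoeff, hn]
    rw [hc]
    filter_upwards [h, eventually_ne_one] with z hz hz1
    convert hz using 1
    have hj : j = k + (j - k - 1 + 1) := by omega
    rw [div_pow]
    nth_rewrite 2 [hj]
    rw [pow_add]
    field_simp

/-- Taylor's formula with an analytic remainder. -/
lemma AnalyticAt.exists_eq_sum_add {f : ℂ → ℂ} {c : ℂ} (hf : AnalyticAt ℂ f c) (N : ℕ) :
    ∃ R : ℂ → ℂ, AnalyticAt ℂ R c ∧ ∀ z, f z =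
      ∑ j ∈ Finset.range N, iteratedDeriv j f c / (Nat.factorial j : ℂ) * (z - c) ^ j +
        (z - c) ^ N * R z := by
  obtain ⟨p, hp⟩ := hf
  have hcoef : ∀ j, (Function.swap dslope c)^[j] f c =
      iteratedDeriv j f c / (Nat.factorial j : ℂ) := by
    intro j
    have h1 := (hp.has_fpower_series_iterate_dslope_fslope j).coeff_zero 1
    rw [← h1, iteratedDeriv_div_factorial_eq_coeff hp]
    have h2 := p.coeff_iterate_fslope j 0
    rw [zero_add] at h2
    exact h2
  refine ⟨_, ⟨_, hp.has_fpower_series_iterate_dslope_fslope N⟩, fun z => ?_⟩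
  induction N with
  | zero => simp
  | succ N ih =>
    rw [Finset.sum_range_succ, ih, Function.iterate_succ_apply', ← hcoef N]
    have h := sub_smul_dslope ((Function.swap dslope c)^[N] f) c z
    simp only [smul_eq_mul] at h
    rw [pow_succ, mul_assoc]
    simp only [Function.swap] at h ⊢
    rw [h]
    ring

/-- The function `z ^ k * ζ(1 / (1 - z)) ^ k` on the unit disc. -/
noncomputable def discZeta (k : ℕ) (z : ℂ) : ℂ := zetaPowAux k (1 / (1 - z)) * (1 - z) ^ k

lemma taylorCoeff_discZeta (k m : ℕ) :
    taylorCoeff (discZeta k) m = ∑ j ∈ Finset.range (m + 1),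
      iteratedDeriv j (zetaPowAux k) 1 / (Nat.factorial j : ℂ) * moebiusCoeff k j m := by
  obtain ⟨R, hR, hRz⟩ :=
    ((differentiable_zetaPowAux k).analyticAt 1).exists_eq_sum_add (m + 1)
  have hQ : AnalyticAt ℂ (fun z => R (1 / (1 - z)) * (1 - z) ^ k / (1 - z) ^ (m + 1)) 0 := by
    have h1 : AnalyticAt ℂ (fun z : ℂ => 1 / (1 - z)) 0 :=
      analyticAt_const.div (analyticAt_const.sub analyticAt_id) (by simp)
    have h2 : AnalyticAt ℂ (fun z : ℂ => 1 - z) 0 := analyticAt_const.sub analyticAt_id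
    refine ((AnalyticAt.fun_comp (by simpa using hR) h1).mul (h2.pow k)).div (h2.pow (m + 1)) (by simp)
  obtain ⟨q, hq⟩ := hQ.exists_hasCoeffs
  have hsum := (HasCoeffs.sum (s := Finset.range (m + 1)) fun j _ => (hasCoeffs_moebius k j).const_mul
    (iteratedDeriv j (zetaPowAux k) 1 / (Nat.factorial j : ℂ))).add (hq.pow_mul (m + 1))
  have hG : HasCoeffs (discZeta k) fun n => ∑ j ∈ Finset.range (m + 1),
      iteratedDeriv j (zetaPowAux k) 1 / (Nat.factorial j : ℂ) * moebiusCoeff k j n +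
        if m + 1 ≤ n then q (n - (m + 1)) else 0 := by
    refine Eventually.mp hsum (eventually_ne_one.mono fun z hz1 hz => ?_)
    · convert hz using 1
      have hs : 1 / (1 - z) - 1 = z / (1 - z) := by field_simp; ring
      rw [discZeta, hRz, hs, add_mul, Finset.sum_mul]
      congr 1
      · exact Finset.sum_congr rfl fun j _ => by ring
      · rw [div_pow]
        ring
  rw [hG.taylorCoeff_eq]
  simp

lemma iteratedDeriv_conj {f : ℂ → ℂ} (hf : ∀ z, f (starRingEnd ℂ z) = starRingEnd ℂ (f z)) (n : ℕ) :
    ∀ z, iteratedDeriv n f (starRingEnd ℂ z) = starRingEnd ℂ (iteratedDeriv n f z) := by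
  induction n with
  | zero => simpa using hf
  | succ n ih =>
    intro z
    have h : (starRingEnd ℂ) ∘ iteratedDeriv n f ∘ (starRingEnd ℂ) = iteratedDeriv n f := by
      ext z
      simp [ih]
    have h2 := deriv_conj_conj (f := iteratedDeriv n f)
    rw [h] at h2
    rw [iteratedDeriv_succ]
    simpa using congrFun h2 (starRingEnd ℂ z)

lemma iteratedDeriv_zetaPowAux_eq_lam (k j : ℕ) :
    iteratedDeriv j (zetaPowAux k) 1 = (lam k j : ℂ) := by
  have hf : ∀ z, zetaPowAux k (starRingEnd ℂ z) = starRingEnd ℂ (zetaPowAux k z) := by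
    intro z
    by_cases hz : z = 1
    · simp [hz, zetaPowAux]
    · have hz' : starRingEnd ℂ z ≠ 1 :=
        fun h => hz (by simpa using congrArg (starRingEnd ℂ) h)
      rw [zetaPowAux, Function.update_of_ne hz, Function.update_of_ne hz', riemannZeta_conj]
      simp
  have h := iteratedDeriv_conj hf j 1
  rw [map_one] at h
  exact (Complex.conj_eq_iff_re.mp h.symm).symm

lemma taylorCoeff_discZeta_eq_ell (k m : ℕ) :
    taylorCoeff (discZeta k) m = (-1) ^ (m + k) * (ell k ((m : ℤ) - k) : ℂ) := by
  rw [taylorCoeff_discZeta]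
  simp_rw [iteratedDeriv_zetaPowAux_eq_lam]
  by_cases hmk : m ≤ k
  · have h1 : ¬ (1 : ℤ) ≤ (m : ℤ) - k := by omega
    have h2 : ((k : ℤ) + ((m : ℤ) - k)).toNat = m := by omega
    have h3 : (-((m : ℤ) - k)).toNat = k - m := by omega
    rw [ell, if_neg h1, h2, h3]
    push_cast
    rw [← mul_assoc, Finset.mul_sum]
    refine Finset.sum_congr rfl fun j hj => ?_
    have hjm : j ≤ m := by simpa [Nat.lt_succ_iff] using hj
    have hch : (k - j).choose (k - m) = (k - j).choose (m - j) := by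
      rw [← Nat.choose_symm (by omega : m - j ≤ k - j)]
      congr 1
      omega
    have hs : (-1 : ℂ) ^ (m - j) = (-1) ^ (m + k) * (-1) ^ k * (-1) ^ j := by
      rw [← pow_add, ← pow_add]
      exact neg_one_pow_congr (by grind)
    rw [moebiusCoeff, if_pos hjm, if_pos (hjm.trans hmk), hch, hs]
    ring
  · obtain ⟨n, rfl⟩ : ∃ n, m = k + n := ⟨m - k, by omega⟩
    have h1 : (1 : ℤ) ≤ ((k + n : ℕ) : ℤ) - k := by omega
    have h2 : (((k + n : ℕ) : ℤ) - k).toNat = n := by omega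
    rw [ell, if_pos h1, h2, show k + n + 1 = k + 1 + n by ring, Finset.sum_range_add]
    have hzero : ∑ j ∈ Finset.range (k + 1), (lam k j : ℂ) / (Nat.factorial j : ℂ) *
        moebiusCoeff k j (k + n) = 0 := by
      refine Finset.sum_eq_zero fun j hj => ?_
      have hjk : j ≤ k := by simpa [Nat.lt_succ_iff] using hj
      rw [moebiusCoeff, if_pos (by omega), if_pos hjk, Nat.choose_eq_zero_of_lt (by omega)]
      simp
    rw [hzero, zero_add]
    push_cast
    have hs : (-1 : ℂ) ^ (k + n + k) * (-1) ^ n = 1 := by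
      rw [← pow_add]
      exact Even.neg_one_pow (by grind)
    rw [← mul_assoc, hs, one_mul]
    refine Finset.sum_nbij' (fun i => i + 1) (fun i => i - 1) (fun i hi => by simp at hi ⊢; omega)
      (fun i hi => by simp at hi ⊢; omega) (fun i hi => by simp)
      (fun i hi => by simp at hi ⊢; omega) fun i hi => ?_
    have hi' : i < n := by simpa using hi
    rw [moebiusCoeff, if_pos (by omega), if_neg (by omega)]
    have e1 : k + n - k - 1 = n - 1 := by omega
    have e2 : k + 1 + i - k - 1 = i := by omega
    have e3 : k + 1 + i = i + 1 + k := by omega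
    rw [e1, e2, e3, Nat.add_sub_cancel]
    ring

lemma differentiableAt_discZeta (k : ℕ) {z : ℂ} (hz : z ≠ 1) :
    DifferentiableAt ℂ (discZeta k) z := by
  have hz' : 1 - z ≠ 0 := sub_ne_zero.mpr (Ne.symm hz)
  have h1 : DifferentiableAt ℂ (fun z : ℂ => 1 / (1 - z)) z := by fun_prop (disch := assumption)
  have h2 : DifferentiableAt ℂ (fun z : ℂ => zetaPowAux k (1 / (1 - z))) z :=
    (differentiable_zetaPowAux k _).fun_comp' z h1
  unfold discZeta
  fun_prop

lemma half_lt_re_inv_one_sub {z : ℂ} (hz : ‖z‖ < 1) : 1 / 2 < (1 / (1 - z)).re := by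
  have hz1 : 1 - z ≠ 0 := by
    intro h
    rw [← sub_eq_zero.mp h] at hz
    simp at hz
  have hn : 0 < normSq (1 - z) := normSq_pos.mpr hz1
  have hz2 : normSq z < 1 := by
    rw [normSq_eq_norm_sq]
    exact pow_lt_one₀ (norm_nonneg z) hz two_ne_zero
  rw [one_div (1 - z), inv_re, lt_div_iff₀ hn]
  simp only [normSq_apply, sub_re, one_re, sub_im, one_im] at *
  nlinarith

lemma norm_discZeta_mul_le (k : ℕ) {z : ℂ} (hz : ‖z‖ < 1) :
    ‖discZeta k z‖ * ‖1 - z‖ ^ k ≤ 4 ^ k := by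
  have hz1 : 1 - z ≠ 0 := by
    intro h
    rw [← sub_eq_zero.mp h] at hz
    simp at hz
  have hn : 0 < ‖1 - z‖ := norm_pos_iff.mpr hz1
  have hle : ‖1 - z‖ ≤ 2 := by
    refine (norm_sub_le _ _).trans ?_
    rw [norm_one]
    linarith
  have hb := norm_riemannZeta₁_le (half_lt_re_inv_one_sub hz)
  have hs : 1 / (1 - z) - 1 = z / (1 - z) := by field_simp; ring
  rw [hs, norm_div, norm_div, norm_one] at hb
  rw [discZeta, zetaPowAux_eq, norm_mul, norm_pow, norm_pow, ← mul_pow, ← mul_pow]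
  refine pow_le_pow_left₀ (by positivity) ?_ k
  calc ‖riemannZeta₁ (1 / (1 - z))‖ * ‖1 - z‖ * ‖1 - z‖
      ≤ 1 / ‖1 - z‖ * (1 + 2 * (‖z‖ / ‖1 - z‖)) * ‖1 - z‖ * ‖1 - z‖ := by gcongr
    _ = ‖1 - z‖ + 2 * ‖z‖ := by field_simp
    _ ≤ 4 := by linarith

/-- The angle `θ` for which `1 / (1 - exp (θ * I)) = 1 / 2 + t * I`. -/
noncomputable def criticalAngle (t : ℝ) : ℝ := π - 2 * Real.arctan (2 * t)

lemma hasDerivAt_criticalAngle (t : ℝ) :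
    HasDerivAt criticalAngle (-(1 / (1 / 4 + t ^ 2))) t := by
  have h := (((hasDerivAt_id t).const_mul 2).arctan.const_mul 2).const_sub π
  refine h.congr_deriv ?_
  simp only [id]
  field_simp
  ring

lemma injective_criticalAngle : Function.Injective criticalAngle := by
  intro a b h
  have h' : Real.arctan (2 * a) = Real.arctan (2 * b) := by
    unfold criticalAngle at h
    linarith
  linarith [Real.arctan_injective h']

lemma image_criticalAngle : criticalAngle '' Set.univ = Set.Ioo 0 (2 * π) := by
  ext θ
  simp only [Set.image_univ, Set.mem_range, Set.mem_Ioo, criticalAngle]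
  constructor
  · rintro ⟨t, rfl⟩
    have h1 := Real.arctan_lt_pi_div_two (2 * t)
    have h2 := Real.neg_pi_div_two_lt_arctan (2 * t)
    constructor <;> linarith
  · rintro ⟨h1, h2⟩
    refine ⟨Real.tan ((π - θ) / 2) / 2, ?_⟩
    rw [mul_div_cancel₀ _ two_ne_zero, Real.arctan_tan (by linarith) (by linarith)]
    ring

lemma circleMap_criticalAngle (t : ℝ) :
    circleMap 0 1 (criticalAngle t) = (-1 / 2 + t * I) / (1 / 2 + t * I) := by
  have hpos : (0 : ℝ) < 1 + (2 * t) ^ 2 := by positivity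
  have hcos : Real.cos (criticalAngle t) = ((2 * t) ^ 2 - 1) / (1 + (2 * t) ^ 2) := by
    rw [criticalAngle, Real.cos_pi_sub, Real.cos_two_mul, Real.cos_sq_arctan]
    field_simp
    ring
  have hsin : Real.sin (criticalAngle t) = 4 * t / (1 + (2 * t) ^ 2) := by
    rw [criticalAngle, Real.sin_pi_sub, Real.sin_two_mul, Real.sin_arctan, Real.cos_arctan]
    have h := Real.mul_self_sqrt hpos.le
    rw [show 2 * (2 * t / √(1 + (2 * t) ^ 2)) * (1 / √(1 + (2 * t) ^ 2)) =
      4 * t / (√(1 + (2 * t) ^ 2) * √(1 + (2 * t) ^ 2)) by ring, h]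
  have hne : (1 / 2 + t * I : ℂ) ≠ 0 := fun h => by simpa using congrArg re h
  have hne' : (1 + (2 * t) ^ 2 : ℂ) ≠ 0 := by exact_mod_cast hpos.ne'
  rw [circleMap_zero, ofReal_one, one_mul, exp_mul_I, ← ofReal_cos, ← ofReal_sin, hcos, hsin,
    eq_div_iff hne]
  push_cast
  rw [div_mul_eq_mul_div, ← add_div, div_mul_eq_mul_div, div_eq_iff hne']
  linear_combination (4 * (t : ℂ) ^ 2) * I_sq

lemma half_add_ne_one (t : ℝ) : (1 / 2 + t * I : ℂ) ≠ 1 := fun h => by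
  have := congrArg re h
  norm_num at this

lemma norm_discZeta_circleMap (k : ℕ) (t : ℝ) :
    ‖discZeta k (circleMap 0 1 (criticalAngle t))‖ = ‖riemannZeta (1 / 2 + t * I)‖ ^ k := by
  have hne : (1 / 2 + t * I : ℂ) ≠ 0 := fun h => by simpa using congrArg re h
  have hz : ‖circleMap 0 1 (criticalAngle t)‖ = 1 := by simp
  have h1 : 1 - circleMap 0 1 (criticalAngle t) = 1 / (1 / 2 + t * I) := by
    rw [circleMap_criticalAngle, one_sub_div hne]
    congr 1
    ring
  rw [discZeta, h1, one_div_one_div, zetaPowAux, Function.update_of_ne (half_add_ne_one t),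
    ← mul_pow, norm_pow]
  have h2 : (1 / 2 + t * I - 1) * riemannZeta (1 / 2 + t * I) * (1 / (1 / 2 + t * I)) =
      circleMap 0 1 (criticalAngle t) * riemannZeta (1 / 2 + t * I) := by
    rw [circleMap_criticalAngle]
    ring
  rw [h2, norm_mul, hz, one_mul]

lemma lintegral_zeta_eq_tsum_ell (k : ℕ) :
    ∫⁻ t : ℝ, ENNReal.ofReal (‖riemannZeta (1 / 2 + t * I)‖ ^ (2 * k) / (1 / 4 + t ^ 2)) =
      ENNReal.ofReal (2 * π) * ∑' m : ℕ, ENNReal.ofReal (ell k ((m : ℤ) - k) ^ 2) := by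
  have hmain := lintegral_boundary_eq (G := discZeta k) (C := 4 ^ k) (k := k)
    (fun z hz => (differentiableAt_discZeta k (by rintro rfl; simp at hz)).differentiableWithinAt)
    (fun z _ hz => (differentiableAt_discZeta k hz).continuousAt)
    (fun z hz => norm_discZeta_mul_le k (mem_ball_zero_iff.mp hz))
  have hcoef : ∀ m, ‖taylorCoeff (discZeta k) m‖ ^ 2 = ell k ((m : ℤ) - k) ^ 2 := fun m => by
    simp [taylorCoeff_discZeta_eq_ell]
  simp_rw [hcoef] at hmain
  rw [← hmain, ← image_criticalAngle, lintegral_image_eq_lintegral_abs_deriv_mul MeasurableSet.univ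
    (fun t _ => (hasDerivAt_criticalAngle t).hasDerivWithinAt) injective_criticalAngle.injOn,
    setLIntegral_univ]
  refine lintegral_congr fun t => ?_
  rw [← ofReal_norm, norm_discZeta_circleMap, ← ENNReal.ofReal_pow (by positivity),
    ← ENNReal.ofReal_mul (abs_nonneg _), abs_neg, abs_of_pos (by positivity), ← pow_mul,
    mul_comm k 2]
  congr 1
  ring

lemma continuous_zeta_integrand (k : ℕ) : Continuous fun t : ℝ =>
    ‖riemannZeta (1 / 2 + t * I)‖ ^ (2 * k) / (1 / 4 + t ^ 2) := by
  have h : Continuous fun t : ℝ => riemannZeta (1 / 2 + t * I) :=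
    continuous_iff_continuousAt.mpr fun t =>
      ContinuousAt.comp (f := fun t : ℝ => (1 / 2 + t * I : ℂ))
        (differentiableAt_riemannZeta (half_add_ne_one t)).continuousAt
        (by fun_prop)
  exact (h.norm.pow _).div (by fun_prop) fun t => by positivity

theorem stmt10 (k : ℕ) (hk : 0 < k) :
    ((Summable fun m : ℕ => (ell k ((m : ℤ) - k)) ^ 2) ↔
      Integrable fun t : ℝ =>
        ‖riemannZeta (1 / 2 + t * Complex.I)‖ ^ (2 * k) / (1 / 4 + t ^ 2)) ∧
    ((Summable fun m : ℕ => (ell k ((m : ℤ) - k)) ^ 2) →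
      ∑' m : ℕ, (ell k ((m : ℤ) - k)) ^ 2 =
        (1 / (2 * π)) *
          ∫ t : ℝ, ‖riemannZeta (1 / 2 + t * Complex.I)‖ ^ (2 * k) / (1 / 4 + t ^ 2)) := by
  have hid := lintegral_zeta_eq_tsum_ell k
  have hf0 : ∀ t : ℝ, 0 ≤ ‖riemannZeta (1 / 2 + t * I)‖ ^ (2 * k) / (1 / 4 + t ^ 2) :=
    fun t => by positivity
  have hmeas := (continuous_zeta_integrand k).aestronglyMeasurable (μ := volume)
  have hpi : 0 < 2 * π := by positivity
  have hIntegral : Integrable (fun t : ℝ =>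
      ‖riemannZeta (1 / 2 + t * I)‖ ^ (2 * k) / (1 / 4 + t ^ 2)) ↔
      ∑' m : ℕ, ENNReal.ofReal (ell k ((m : ℤ) - k) ^ 2) ≠ ⊤ := by
    rw [← lintegral_ofReal_ne_top_iff_integrable hmeas (Eventually.of_forall hf0), hid]
    simp [ENNReal.mul_eq_top, Real.pi_pos]
  have hsum : (Summable fun m : ℕ => ell k ((m : ℤ) - k) ^ 2) ↔
      ∑' m : ℕ, ENNReal.ofReal (ell k ((m : ℤ) - k) ^ 2) ≠ ⊤ := by
    refine ⟨fun h => h.tsum_ofReal_ne_top, fun h => ?_⟩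
    simpa [ENNReal.toReal_ofReal, sq_nonneg] using ENNReal.summable_toReal h
  refine ⟨hsum.trans hIntegral.symm, fun h => ?_⟩
  rw [integral_eq_lintegral_of_nonneg_ae (Eventually.of_forall hf0) hmeas, hid,
    ENNReal.toReal_mul, ENNReal.toReal_ofReal hpi.le,
    ← ENNReal.ofReal_tsum_of_nonneg (fun m => sq_nonneg _) h,
    ENNReal.toReal_ofReal (tsum_nonneg fun m => sq_nonneg _)]
  field_simp
end

section
/- Fix a positive integer k and assume ∫_1^∞ Δ_k(x)² x^{-2} dx < ∞. Then lim_{N→∞} ∫_1^∞ |Δ_k(x) − Σ_{n=0}^N (-1)^n ℓ_{n,k} L_n(log x)|² x^{-2} dx = 0; that is, the Fourier–Laguerre expansion Δ_k(x) = Σ_{n=0}^∞ (-1)^n ℓ_{n,k} L_n(log x) holds in the weighted L² sense on (1,∞) with weight x^{-2}. -/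
open scoped Real Topology
open Complex Filter MeasureTheory Finset Asymptotics

theorem integrableOn_pow_mul_exp (j : ℕ) {c : ℝ} (hc : 0 < c) :
    IntegrableOn (fun u : ℝ => u ^ j * Real.exp (-(c * u))) (Set.Ioi 0) := by
  have := integrableOn_rpow_mul_exp_neg_mul_rpow (p := 1) (s := j) (b := c)
    (by have : (0 : ℝ) ≤ j := j.cast_nonneg
        linarith) one_pos hc
  simpa using this

theorem integral_pow_mul_exp (j : ℕ) {c : ℝ} (hc : 0 < c) :
    ∫ u in Set.Ioi (0 : ℝ), u ^ j * Real.exp (-(c * u)) = j.factorial / c ^ (j + 1) := by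
  have := Real.integral_rpow_mul_exp_neg_mul_Ioi (a := (j : ℝ) + 1) (r := c) (by positivity) hc
  rw [Real.Gamma_nat_eq_factorial] at this
  simp only [add_sub_cancel_right, Real.rpow_natCast] at this
  rw [this, show ((j : ℝ) + 1) = ((j + 1 : ℕ) : ℝ) by push_cast; ring, Real.rpow_natCast]
  simp [div_eq_mul_inv, mul_comm]

/-- The probability measure `e^{-u} du` on `(0, ∞)`. -/
noncomputable def expWeight : Measure ℝ :=
  (volume.restrict (Set.Ioi 0)).withDensity (fun u => ENNReal.ofReal (Real.exp (-u)))

theorem integral_expWeight {E : Type*} [NormedAddCommGroup E] [NormedSpace ℝ E] (g : ℝ → E) :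
    ∫ u, g u ∂expWeight = ∫ u in Set.Ioi (0 : ℝ), Real.exp (-u) • g u := by
  rw [expWeight, integral_withDensity_eq_integral_toReal_smul (by fun_prop) (by simp)]
  simp [ENNReal.toReal_ofReal (Real.exp_pos _).le]

theorem integrable_expWeight_iff {E : Type*} [NormedAddCommGroup E] [NormedSpace ℝ E] (g : ℝ → E) :
    Integrable g expWeight ↔ IntegrableOn (fun u => Real.exp (-u) • g u) (Set.Ioi 0) := by
  rw [expWeight, integrable_withDensity_iff_integrable_smul' (by fun_prop) (by simp)]
  simp [ENNReal.toReal_ofReal (Real.exp_pos _).le, IntegrableOn]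

theorem integrable_pow_expWeight (j : ℕ) : Integrable (fun u => u ^ j) expWeight := by
  rw [integrable_expWeight_iff]
  simpa [mul_comm] using integrableOn_pow_mul_exp j one_pos

theorem integral_pow_expWeight (j : ℕ) : ∫ u, u ^ j ∂expWeight = j.factorial := by
  rw [integral_expWeight]
  simpa [mul_comm] using integral_pow_mul_exp j one_pos

instance : IsFiniteMeasure expWeight := by
  have := integrable_pow_expWeight 0
  simp only [pow_zero, integrable_const_iff, one_ne_zero, false_or] at this
  exact this

theorem memLp_two_of_sq {f g : ℝ → ℝ} (hf : Measurable f) (hg : ∀ u, f u ^ 2 = g u)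
    (h : Integrable g expWeight) : MemLp f 2 expWeight := by
  rw [memLp_two_iff_integrable_sq hf.aestronglyMeasurable]
  simpa only [hg] using h

theorem memLp_pow_expWeight (j : ℕ) : MemLp (fun u : ℝ => u ^ j) 2 expWeight :=
  memLp_two_of_sq (by fun_prop) (fun u => (pow_mul u j 2).symm) (integrable_pow_expWeight _)

theorem memLp_exp_expWeight {t : ℝ} (ht : t < 1 / 2) :
    MemLp (fun u : ℝ => Real.exp (t * u)) 2 expWeight := by
  refine memLp_two_of_sq (by fun_prop) (g := fun u => Real.exp (2 * (t * u)))
    (fun u => by rw [two_mul, Real.exp_add, sq]) ?_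
  rw [integrable_expWeight_iff]
  have := integrableOn_pow_mul_exp 0 (c := 1 - 2 * t) (by linarith)
  refine this.congr_fun (fun u _ => ?_) measurableSet_Ioi
  simp only [pow_zero, one_mul, smul_eq_mul, ← Real.exp_add]
  ring_nf

theorem laguerre_eq (n : ℕ) : laguerre n = fun u =>
    ∑ j ∈ Finset.range (n + 1), ((n.choose j : ℝ) * (-1 : ℝ) ^ j / j.factorial) * u ^ j := by
  funext u
  exact Finset.sum_congr rfl fun j _ => by ring

theorem memLp_laguerre (n : ℕ) : MemLp (laguerre n) 2 expWeight := by
  rw [laguerre_eq]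
  exact memLp_finsetSum _ fun j _ => (memLp_pow_expWeight j).const_mul _

theorem sum_neg_one_pow_choose_mul (n : ℕ) (g : ℕ → ℝ) :
    ∑ j ∈ Finset.range (n + 2), ((n + 1).choose j : ℝ) * (-1) ^ j * g j =
      ∑ j ∈ Finset.range (n + 1), (n.choose j : ℝ) * (-1) ^ j * (g j - g (j + 1)) := by
  rw [Finset.sum_range_succ']
  simp only [Nat.choose_succ_succ, Nat.cast_add, mul_sub, add_mul, Finset.sum_add_distrib,
    Finset.sum_sub_distrib, pow_succ]
  rw [Finset.sum_range_succ' (fun j => (n.choose j : ℝ) * (-1) ^ j * g j),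
    Finset.sum_range_succ (fun j => (n.choose (j + 1) : ℝ) * _ * g (j + 1))]
  simp [pow_succ]
  ring

theorem sum_neg_one_pow_choose_mul_choose (n a i : ℕ) :
    ∑ j ∈ Finset.range (n + 1), (n.choose j : ℝ) * (-1) ^ j * ((a + j).choose i : ℝ) =
      if i < n then 0 else (-1) ^ n * (a.choose (i - n) : ℝ) := by
  induction n generalizing a with
  | zero => simp
  | succ n ih =>
    rw [sum_neg_one_pow_choose_mul]
    simp only [mul_sub, Finset.sum_sub_distrib]
    have h2 := ih (a + 1)
    simp only [add_assoc, add_comm 1] at h2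
    rw [ih a, h2]
    rcases lt_trichotomy i n with h | h | h
    · simp [h, h.trans n.lt_succ_self]
    · simp [h]
    · obtain ⟨d, rfl⟩ := Nat.exists_eq_add_of_lt h
      have e1 : n + d + 1 - n = d + 1 := by omega
      have e2 : n + d + 1 - (n + 1) = d := by omega
      have e3 : ¬ (n + d + 1 < n) := by omega
      have e4 : ¬ (n + d + 1 < n + 1) := by omega
      rw [if_neg e3, if_neg e3, if_neg e4, e1, e2, Nat.choose_succ_succ]
      push_cast
      ring

theorem integral_pow_mul_laguerre (n i : ℕ) :
    ∫ u, u ^ i * laguerre n u ∂expWeight =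
      if i < n then 0 else (-1) ^ n * i.factorial * (i.choose n : ℝ) := by
  have h1 : ∀ u : ℝ, u ^ i * laguerre n u = ∑ j ∈ Finset.range (n + 1),
      ((n.choose j : ℝ) * (-1 : ℝ) ^ j / j.factorial) * u ^ (i + j) := fun u => by
    rw [laguerre_eq, Finset.mul_sum]
    exact Finset.sum_congr rfl fun j _ => by ring
  simp only [h1]
  rw [integral_finsetSum _ fun j _ => (integrable_pow_expWeight _).const_mul _]
  simp only [integral_const_mul, integral_pow_expWeight]
  have h2 := sum_neg_one_pow_choose_mul_choose n i i
  have h3 : ∀ j, ((n.choose j : ℝ) * (-1 : ℝ) ^ j / j.factorial) * (i + j).factorial =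
      i.factorial * ((n.choose j : ℝ) * (-1) ^ j * ((i + j).choose i : ℝ)) := fun j => by
    rw [Nat.cast_add_choose]
    field_simp
  simp only [h3, ← Finset.mul_sum, h2]
  split_ifs with h
  · simp
  · rw [Nat.choose_symm (not_lt.1 h)]
    ring

theorem integral_laguerre_mul_laguerre_of_le {m n : ℕ} (hmn : m ≤ n) :
    ∫ u, laguerre m u * laguerre n u ∂expWeight = if m = n then 1 else 0 := by
  have h1 : ∀ u : ℝ, laguerre m u * laguerre n u = ∑ i ∈ Finset.range (m + 1),
      ((m.choose i : ℝ) * (-1 : ℝ) ^ i / i.factorial) * (u ^ i * laguerre n u) := fun u => by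
    rw [laguerre_eq m, Finset.sum_mul]
    exact Finset.sum_congr rfl fun j _ => by ring
  simp only [h1]
  have h2 (i : ℕ) : Integrable (fun u => u ^ i * laguerre n u) expWeight :=
    (memLp_pow_expWeight i).integrable_mul (memLp_laguerre n)
  rw [integral_finsetSum _ fun i _ => (h2 i).const_mul _]
  simp only [integral_const_mul, integral_pow_mul_laguerre]
  rw [Finset.sum_range_succ, Finset.sum_eq_zero, zero_add]
  · rcases hmn.lt_or_eq with h | h
    · simp [h, h.ne]
    · subst h
      simp only [Nat.choose_self, lt_irrefl, if_false, if_true]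
      field_simp
      rw [← pow_mul, mul_comm m 2, pow_mul, neg_one_sq, one_pow, Nat.cast_one, one_pow, one_mul]
  · intro i hi
    rw [if_pos (by have := Finset.mem_range.1 hi; omega), mul_zero]

theorem integral_laguerre_mul_laguerre (m n : ℕ) :
    ∫ u, laguerre m u * laguerre n u ∂expWeight = if m = n then 1 else 0 := by
  rcases le_total m n with h | h
  · exact integral_laguerre_mul_laguerre_of_le h
  · simp only [mul_comm (laguerre m _), eq_comm (a := m)]
    exact integral_laguerre_mul_laguerre_of_le h

theorem HasFPowerSeriesAt.eventuallyEq_of_same {f g : ℂ → ℂ} {z : ℂ}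
    {p : FormalMultilinearSeries ℂ ℂ ℂ} (hf : HasFPowerSeriesAt f p z)
    (hg : HasFPowerSeriesAt g p z) : f =ᶠ[𝓝 z] g := by
  rw [hasFPowerSeriesAt_iff'] at hf hg
  filter_upwards [hf, hg] with w h1 h2 using h1.unique h2

/-- Two measures on `ℝ` with exponential tails and the same moments are equal. -/
theorem measure_eq_of_moments {μ ν : Measure ℝ} [IsFiniteMeasure μ] [IsFiniteMeasure ν] {c : ℝ}
    (hc : 0 < c)
    (hμ : Set.Iio c ⊆ ProbabilityTheory.integrableExpSet id μ)
    (hν : Set.Iio c ⊆ ProbabilityTheory.integrableExpSet id ν)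
    (h : ∀ n : ℕ, ∫ u, u ^ n ∂μ = ∫ u, u ^ n ∂ν) : μ = ν := by
  have hμ' := interior_maximal hμ isOpen_Iio
  have hν' := interior_maximal hν isOpen_Iio
  have hU : IsPreconnected {z : ℂ | z.re < c} := (convex_halfSpace_re_lt c).isPreconnected
  have hEq := AnalyticOnNhd.eqOn_of_preconnected_of_eventuallyEq
    (f := ProbabilityTheory.complexMGF id μ) (g := ProbabilityTheory.complexMGF id ν)
    (U := {z : ℂ | z.re < c}) (z₀ := 0)
    (fun z hz => ProbabilityTheory.analyticAt_complexMGF (hμ' hz))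
    (fun z hz => ProbabilityTheory.analyticAt_complexMGF (hν' hz)) hU (by simpa using hc) (by
      have h1 := (ProbabilityTheory.analyticAt_complexMGF (X := id) (μ := μ) (z := 0)
        (hμ' (by simpa using hc))).hasFPowerSeriesAt
      have h2 := (ProbabilityTheory.analyticAt_complexMGF (X := id) (μ := ν) (z := 0)
        (hν' (by simpa using hc))).hasFPowerSeriesAt
      have h3 (n : ℕ) : iteratedDeriv n (ProbabilityTheory.complexMGF id μ) 0 =
          iteratedDeriv n (ProbabilityTheory.complexMGF id ν) 0 := by
        rw [ProbabilityTheory.iteratedDeriv_complexMGF (hμ' (by simpa using hc)),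
          ProbabilityTheory.iteratedDeriv_complexMGF (hν' (by simpa using hc))]
        have h4 := congrArg (fun x : ℝ => (x : ℂ)) (h n)
        simp only [← integral_complex_ofReal] at h4
        simpa using h4
      simp only [h3] at h1
      exact HasFPowerSeriesAt.eventuallyEq_of_same h1 h2)
  refine Measure.ext_of_charFun (funext fun t => ?_)
  have h4 : ProbabilityTheory.complexMGF id μ (t * I) = ProbabilityTheory.complexMGF id ν (t * I) :=
    hEq (by simpa using hc)
  rw [ProbabilityTheory.complexMGF_mul_I aemeasurable_id,
    ProbabilityTheory.complexMGF_mul_I aemeasurable_id] at h4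
  simpa using h4

theorem integrable_posPart_mul {f g : ℝ → ℝ} (hf : MemLp f 2 expWeight)
    (hg : MemLp g 2 expWeight) : Integrable (fun u => max (f u) 0 * g u) expWeight :=
  hf.pos_part.integrable_mul hg

theorem integrableExpSet_withDensity {f : ℝ → ℝ} (hf : MemLp f 2 expWeight) :
    Set.Iio (1 / 2) ⊆ ProbabilityTheory.integrableExpSet id
      (expWeight.withDensity fun u => ENNReal.ofReal (f u)) := by
  intro t ht
  change Integrable _ _
  rw [integrable_withDensity_iff_integrable_smul₀' hf.aestronglyMeasurable.aemeasurable.ennreal_ofReal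
    (by simp)]
  simpa [ENNReal.toReal_ofReal'] using integrable_posPart_mul hf (memLp_exp_expWeight ht)

theorem integral_pow_withDensity {f : ℝ → ℝ} (hf : MemLp f 2 expWeight) (n : ℕ) :
    ∫ u, u ^ n ∂(expWeight.withDensity fun u => ENNReal.ofReal (f u)) =
      ∫ u, max (f u) 0 * u ^ n ∂expWeight := by
  rw [integral_withDensity_eq_integral_toReal_smul₀
    hf.aestronglyMeasurable.aemeasurable.ennreal_ofReal (by simp)]
  simp [ENNReal.toReal_ofReal']

/-- A function in `L²(e^{-u} du)` all of whose moments vanish is zero almost everywhere. -/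
theorem ae_eq_zero_of_moments {f : ℝ → ℝ} (hf : MemLp f 2 expWeight)
    (h : ∀ n : ℕ, ∫ u, u ^ n * f u ∂expWeight = 0) : f =ᵐ[expWeight] 0 := by
  have hn : MemLp (fun u => -f u) 2 expWeight := hf.neg
  have hint : Integrable f expWeight := hf.integrable (by norm_num)
  have : IsFiniteMeasure (expWeight.withDensity fun u => ENNReal.ofReal (f u)) :=
    isFiniteMeasure_withDensity_ofReal hint.2
  have : IsFiniteMeasure (expWeight.withDensity fun u => ENNReal.ofReal (-f u)) :=
    isFiniteMeasure_withDensity_ofReal hint.neg.2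
  have key := measure_eq_of_moments (by norm_num) (integrableExpSet_withDensity hf)
    (integrableExpSet_withDensity hn) (fun n => by
      rw [integral_pow_withDensity hf, integral_pow_withDensity hn, ← sub_eq_zero,
        ← integral_sub (integrable_posPart_mul hf (memLp_pow_expWeight n))
          (integrable_posPart_mul hn (memLp_pow_expWeight n))]
      refine Eq.trans (integral_congr_ae (Eventually.of_forall fun u => ?_)) (h n)
      simp only [← sub_mul]
      rw [max_zero_sub_max_neg_zero_eq_self, mul_comm])
  rw [withDensity_eq_iff_of_sigmaFinite hf.aestronglyMeasurable.aemeasurable.ennreal_ofReal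
    hn.aestronglyMeasurable.aemeasurable.ennreal_ofReal] at key
  filter_upwards [key] with u hu
  rcases le_total (f u) 0 with h0 | h0
  · rw [ENNReal.ofReal_of_nonpos h0, eq_comm, ENNReal.ofReal_eq_zero] at hu
    exact le_antisymm h0 (neg_nonpos.1 hu)
  · rw [ENNReal.ofReal_of_nonpos (p := -f u) (by linarith), ENNReal.ofReal_eq_zero] at hu
    exact le_antisymm hu h0

theorem integral_pow_mul_eq_zero_of_laguerre {f : ℝ → ℝ} (hf : MemLp f 2 expWeight)
    (h : ∀ n : ℕ, ∫ u, laguerre n u * f u ∂expWeight = 0) (n : ℕ) :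
    ∫ u, u ^ n * f u ∂expWeight = 0 := by
  induction n using Nat.strong_induction_on with
  | _ n ih =>
    have hi (j : ℕ) : Integrable (fun u => u ^ j * f u) expWeight :=
      (memLp_pow_expWeight j).integrable_mul hf
    have h1 := h n
    simp only [laguerre_eq, Finset.sum_mul, mul_assoc] at h1
    rw [integral_finsetSum _ fun j _ => by simpa only [mul_assoc] using (hi j).const_mul _] at h1
    simp only [integral_const_mul] at h1
    rw [Finset.sum_range_succ, Finset.sum_eq_zero fun j hj => by
      rw [ih j (Finset.mem_range.1 hj), mul_zero], zero_add] at h1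
    exact (mul_eq_zero.1 h1).resolve_left (by simp [Nat.factorial_ne_zero])

/-- The Laguerre polynomials as elements of `L²(e^{-u} du)`. -/
noncomputable def laguerreLp (n : ℕ) : Lp ℝ 2 expWeight := (memLp_laguerre n).toLp _

theorem inner_laguerreLp {f : ℝ → ℝ} (hf : MemLp f 2 expWeight) (n : ℕ) :
    inner ℝ (laguerreLp n) (hf.toLp f) = ∫ u, laguerre n u * f u ∂expWeight := by
  rw [L2.inner_def]
  refine integral_congr_ae ?_
  filter_upwards [(memLp_laguerre n).coeFn_toLp, hf.coeFn_toLp] with u h1 h2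
  rw [laguerreLp, h1, h2]
  simp [mul_comm]

theorem orthonormal_laguerreLp : Orthonormal ℝ laguerreLp := by
  rw [orthonormal_iff_ite]
  intro m n
  exact (inner_laguerreLp (memLp_laguerre n) m).trans (integral_laguerre_mul_laguerre m n)

theorem span_laguerreLp_orthogonal :
    (Submodule.span ℝ (Set.range laguerreLp))ᗮ = ⊥ := by
  rw [Submodule.eq_bot_iff]
  intro f hf
  have hm := Lp.memLp f
  have h0 : (f : ℝ → ℝ) =ᵐ[expWeight] 0 :=
    ae_eq_zero_of_moments hm (integral_pow_mul_eq_zero_of_laguerre hm fun n => by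
      rw [← inner_laguerreLp hm, Lp.toLp_coeFn]
      exact (Submodule.mem_orthogonal _ _).1 hf _ (Submodule.subset_span ⟨n, rfl⟩))
  exact (Lp.eq_zero_iff_ae_eq_zero).2 h0

theorem norm_toLp_sq {f : ℝ → ℝ} (hf : MemLp f 2 expWeight) :
    ‖hf.toLp f‖ ^ 2 = ∫ u, f u ^ 2 ∂expWeight := by
  rw [← real_inner_self_eq_norm_sq, L2.inner_def]
  refine integral_congr_ae ?_
  filter_upwards [hf.coeFn_toLp] with u h1
  rw [h1]
  simp [sq]

/-- The Fourier–Laguerre expansion converges in `L²(e^{-u} du)`. -/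
theorem tendsto_laguerre_expansion {f : ℝ → ℝ} (hf : MemLp f 2 expWeight) :
    Tendsto (fun N : ℕ => ∫ u, (f u - ∑ n ∈ Finset.range (N + 1),
      (∫ v, laguerre n v * f v ∂expWeight) * laguerre n u) ^ 2 ∂expWeight) atTop (𝓝 0) := by
  let b := HilbertBasis.mkOfOrthogonalEqBot orthonormal_laguerreLp span_laguerreLp_orthogonal
  have h1 := (b.hasSum_repr (hf.toLp f)).tendsto_sum_nat
  have h2 := (tendsto_const_nhds (x := hf.toLp f)).sub (h1.comp (tendsto_add_atTop_nat 1))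
  have h3 := (h2.norm.pow 2)
  simp only [sub_self, norm_zero, ne_eq, OfNat.ofNat_ne_zero, not_false_eq_true, zero_pow] at h3
  refine h3.congr fun N => ?_
  have hs (n : ℕ) : MemLp (fun u => (∫ v, laguerre n v * f v ∂expWeight) * laguerre n u) 2
    expWeight := (memLp_laguerre n).const_mul _
  have hsum : MemLp (fun u => ∑ n ∈ Finset.range (N + 1),
      (∫ v, laguerre n v * f v ∂expWeight) * laguerre n u) 2 expWeight :=
    memLp_finsetSum _ fun n _ => hs n
  have hd := hf.sub hsum
  have h4 : hd.toLp _ = hf.toLp f - ∑ n ∈ Finset.range (N + 1),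
      b.repr (hf.toLp f) n • b n := by
    rw [MemLp.toLp_sub hf hsum]
    congr 1
    rw [Lp.ext_iff]
    refine hsum.coeFn_toLp.trans (EventuallyEq.trans ?_ (Lp.coeFn_finsetSum _ _).symm)
    have h5 : ∀ᵐ u ∂expWeight, ∀ n : ℕ, (b.repr (hf.toLp f) n • b n : Lp ℝ 2 expWeight) u =
        (∫ v, laguerre n v * f v ∂expWeight) * laguerre n u := by
      rw [ae_all_iff]
      intro n
      rw [b.repr_apply_apply, HilbertBasis.coe_mkOfOrthogonalEqBot, inner_laguerreLp]
      filter_upwards [Lp.coeFn_smul (∫ v, laguerre n v * f v ∂expWeight) (laguerreLp n),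
        (memLp_laguerre n).coeFn_toLp] with u h6 h7
      rw [h6, Pi.smul_apply, laguerreLp, h7, smul_eq_mul]
    filter_upwards [h5] with u h6
    simp [h6]
  simp only [Function.comp_apply]
  rw [← h4, norm_toLp_sq]
  rfl

theorem LSeriesHasSum_dk (k : ℕ) {s : ℂ} (hs : 1 < s.re) :
    LSeriesHasSum (fun n => (dk k n : ℂ)) s (riemannZeta s ^ k) := by
  induction k with
  | zero =>
    have h1 : LSeriesHasSum (LSeries.delta) s 1 := by
      simpa [LSeries_delta] using (LSeriesSummable.LSeriesHasSum (s := s)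
        (f := LSeries.delta) (summable_of_hasFiniteSupport (by
          refine (Set.finite_singleton 1).subset fun n hn => ?_
          by_contra hne
          apply hn
          simp only [Set.mem_singleton_iff] at hne
          rcases eq_or_ne n 0 with rfl | h0
          · simp
          · simp [LSeries.term, LSeries.delta, hne])))
    convert! h1 using 1
    funext n
    simp [dk, LSeries.delta, ArithmeticFunction.one_apply]
  | succ k ih =>
    have hz := ArithmeticFunction.LSeriesHasSum_zeta hs
    have := ArithmeticFunction.LSeriesHasSum_mul
      (f := ((ArithmeticFunction.zeta ^ k : ArithmeticFunction ℕ) : ArithmeticFunction ℂ))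
      (g := (ArithmeticFunction.zeta : ArithmeticFunction ℂ)) (s := s) (a := riemannZeta s ^ k)
      (b := riemannZeta s) ih hz
    rw [← ArithmeticFunction.natCoe_mul, ← pow_succ, ← pow_succ] at this
    exact this

theorem sum_dk_isBigO (k : ℕ) {r : ℝ} (hr : 1 < r) :
    (fun n : ℕ => ∑ j ∈ Finset.Icc 1 n, (dk k j : ℝ)) =O[atTop] fun n : ℕ => (n : ℝ) ^ r := by
  have hsum := (LSeriesHasSum_dk k (s := r) (by simpa using hr)).LSeriesSummable.norm
  refine IsBigO.of_bound (∑' n, ‖LSeries.term (fun n => (dk k n : ℂ)) r n‖)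
    (Eventually.of_forall fun n => ?_)
  rw [Real.norm_of_nonneg (by positivity), Real.norm_of_nonneg (by positivity)]
  have h1 : ∑ j ∈ Finset.Icc 1 n, (dk k j : ℝ) ≤
      ∑ j ∈ Finset.Icc 1 n, ‖LSeries.term (fun n => (dk k n : ℂ)) r j‖ * (n : ℝ) ^ r := by
    refine Finset.sum_le_sum fun j hj => ?_
    obtain ⟨hj1, hj2⟩ := Finset.mem_Icc.1 hj
    have hj0 : (0 : ℝ) < (j : ℝ) ^ r := Real.rpow_pos_of_pos (by exact_mod_cast hj1) _
    rw [LSeries.norm_term_eq, if_neg (by omega), ofReal_re, div_mul_eq_mul_div, le_div_iff₀ hj0]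
    simp only [Complex.norm_natCast]
    gcongr
  refine h1.trans ?_
  rw [← Finset.sum_mul]
  gcongr
  exact hsum.sum_le_tsum _ fun _ _ => norm_nonneg _

/-- Laplace transform of the summatory function of `d_k`. -/
theorem mul_integral_sum_dk (k : ℕ) {w : ℝ} (hw : 0 < w) :
    (1 + w) * ∫ u in Set.Ioi (0 : ℝ), (∑ n ∈ Finset.Icc 1 ⌊Real.exp u⌋₊, (dk k n : ℝ)) *
      Real.exp (-((1 + w) * u)) = (riemannZeta (1 + w) ^ k).re := by
  have hs : (1 : ℝ) < (1 + w : ℂ).re := by simpa using hw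
  have h1 := LSeries_eq_mul_integral_of_nonneg (fun n => (dk k n : ℝ)) (r := 1 + w / 2)
    (s := 1 + w) (by positivity) (by simpa using hw) (sum_dk_isBigO k (by linarith))
    (fun n => by positivity)
  have h2 : LSeries (fun n => (((dk k n : ℝ)) : ℂ)) (1 + w) = riemannZeta (1 + w) ^ k := by
    simpa using (LSeriesHasSum_dk k hs).LSeries_eq
  have h3 : ∫ t in Set.Ioi (1 : ℝ), (∑ j ∈ Finset.Icc 1 ⌊t⌋₊, ((dk k j : ℝ) : ℂ)) *
      (t : ℂ) ^ (-((1 + w : ℂ) + 1)) = ((∫ t in Set.Ioi (1 : ℝ),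
        (∑ j ∈ Finset.Icc 1 ⌊t⌋₊, (dk k j : ℝ)) * t ^ (-((1 + w) + 1)) : ℝ) : ℂ) := by
    rw [← integral_complex_ofReal]
    refine setIntegral_congr_fun measurableSet_Ioi fun t ht => ?_
    simp only [ofReal_mul, ofReal_sum]
    rw [ofReal_cpow (zero_le_one.trans (le_of_lt ht))]
    push_cast
    rfl
  rw [h2, h3] at h1
  rw [h1, ← ofReal_one, ← ofReal_add, ← ofReal_mul, ofReal_re]
  congr 1
  have h4 := integral_comp_exp_Ioi (fun t : ℝ => (∑ j ∈ Finset.Icc 1 ⌊t⌋₊, (dk k j : ℝ)) *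
    t ^ (-((1 + w) + 1))) 0
  rw [Real.exp_zero] at h4
  rw [← h4]
  refine setIntegral_congr_fun measurableSet_Ioi fun u _ => ?_
  simp only [smul_eq_mul]
  rw [← Real.exp_mul, mul_left_comm, ← Real.exp_add]
  ring_nf

theorem measurable_Deltak (k : ℕ) : Measurable (Deltak k) := by
  unfold Deltak
  have h1 : Measurable fun x : ℝ => ∑ n ∈ Finset.Icc 1 ⌊x⌋₊, (dk k n : ℝ) :=
    (measurable_from_nat (f := fun m : ℕ => ∑ n ∈ Finset.Icc 1 m, (dk k n : ℝ))).comp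
      Nat.measurable_floor
  fun_prop

theorem memLp_Deltak_exp {k : ℕ}
    (h : IntegrableOn (fun x : ℝ => (Deltak k x) ^ 2 / x ^ 2) (Set.Ioi 1)) :
    MemLp (fun u => Deltak k (Real.exp u)) 2 expWeight := by
  refine memLp_two_of_sq ((measurable_Deltak k).comp Real.measurable_exp) (fun u => rfl) ?_
  rw [integrable_expWeight_iff]
  rw [← Real.exp_zero, ← integrableOn_comp_exp_Ioi] at h
  refine h.congr_fun (fun u _ => ?_) measurableSet_Ioi
  simp only [smul_eq_mul, Real.exp_neg]
  field_simp

/-- The generating identity between the Laplace transform of the error term and `ζ(1+w)^k`. -/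
theorem laplace_Deltak {k : ℕ}
    (hF : MemLp (fun u => Deltak k (Real.exp u)) 2 expWeight) {w : ℝ} (hw : 0 < w) :
    (1 + w) * ((∫ u, Real.exp (-w * u) * Deltak k (Real.exp u) ∂expWeight) +
      ∑ j ∈ Finset.range k, aCoef k j / w ^ (j + 1)) = (riemannZeta (1 + w) ^ k).re := by
  rw [← mul_integral_sum_dk k hw]
  congr 1
  have hi : Integrable (fun u => Real.exp (-w * u) * Deltak k (Real.exp u)) expWeight :=
    (memLp_exp_expWeight (by linarith)).integrable_mul hF
  have hi' := (integrable_expWeight_iff _).1 hi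
  have hp (j : ℕ) : IntegrableOn (fun u : ℝ => aCoef k j / j.factorial *
      (u ^ j * Real.exp (-(w * u)))) (Set.Ioi 0) := (integrableOn_pow_mul_exp j hw).const_mul _
  have h1 : ∑ j ∈ Finset.range k, aCoef k j / w ^ (j + 1) = ∫ u in Set.Ioi (0 : ℝ),
      ∑ j ∈ Finset.range k, aCoef k j / j.factorial * (u ^ j * Real.exp (-(w * u))) := by
    rw [integral_finsetSum _ fun j _ => hp j]
    refine Finset.sum_congr rfl fun j _ => ?_
    rw [integral_const_mul, integral_pow_mul_exp j hw]
    field_simp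
  rw [integral_expWeight, h1, ← integral_add hi' (integrable_finsetSum _ fun j _ => hp j)]
  refine setIntegral_congr_fun measurableSet_Ioi fun u _ => ?_
  have e1 : Real.exp (-((1 + w) * u)) = Real.exp (-u) * Real.exp (-(w * u)) := by
    rw [← Real.exp_add]
    ring_nf
  have e2 : Real.exp (-u) * Real.exp u = 1 := by rw [← Real.exp_add]; simp
  have e3 : ∑ j ∈ Finset.range k, aCoef k j / j.factorial * (u ^ j * Real.exp (-(w * u))) =
      (∑ j ∈ Finset.range k, aCoef k j / j.factorial * u ^ j) * Real.exp (-(w * u)) := by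
    rw [Finset.sum_mul]
    exact Finset.sum_congr rfl fun j _ => by ring
  simp only [smul_eq_mul, Deltak, Real.log_exp, e3, e1, neg_mul]
  linear_combination (-(∑ j ∈ Finset.range k, aCoef k j / j.factorial * u ^ j) *
    Real.exp (-(w * u))) * e2

theorem hasSum_laplace {f : ℝ → ℝ} (hf : MemLp f 2 expWeight) {w : ℝ} (hw : |w| < 1 / 2) :
    HasSum (fun j : ℕ => w ^ j * ((-1) ^ j / j.factorial * ∫ u, u ^ j * f u ∂expWeight))
      (∫ u, Real.exp (-w * u) * f u ∂expWeight) := by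
  have he (x : ℝ) : HasSum (fun j : ℕ => x ^ j / j.factorial) (Real.exp x) := by
    rw [Real.exp_eq_exp_ℝ]
    exact NormedSpace.expSeries_div_hasSum_exp x
  have hpos : ∀ᵐ u ∂expWeight, 0 < u := by
    refine (withDensity_absolutelyContinuous _ _).ae_le ?_
    exact ae_restrict_mem measurableSet_Ioi
  have hb (u : ℝ) : HasSum (fun j : ℕ => (|w| * u) ^ j / j.factorial * |f u|)
      (Real.exp (|w| * u) * |f u|) := (he _).mul_right _
  have key := hasSum_integral_of_dominated_convergence (μ := expWeight)
    (F := fun (j : ℕ) u => (-w * u) ^ j / j.factorial * f u)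
    (f := fun u => Real.exp (-w * u) * f u)
    (fun (j : ℕ) u => (|w| * u) ^ j / j.factorial * |f u|)
    (fun j => AEStronglyMeasurable.mul (by fun_prop) hf.aestronglyMeasurable)
    (fun j => by
      filter_upwards [hpos] with u hu
      simp [abs_of_pos hu])
    (Eventually.of_forall fun u => (hb u).summable)
    (by
      simp only [(hb _).tsum_eq]
      exact (memLp_exp_expWeight hw).integrable_mul hf.abs)
    (Eventually.of_forall fun u => (he _).mul_right _)
  convert! key using 2 with j
  rw [← integral_const_mul, ← integral_const_mul]
  congr 1
  funext u
  rw [mul_pow, neg_pow]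
  ring

theorem zetaPowAux_analyticAt (k : ℕ) : AnalyticAt ℂ (zetaPowAux k) 1 := by
  refine Complex.analyticAt_of_differentiable_on_punctured_nhds_of_continuousAt ?_ ?_
  · filter_upwards [self_mem_nhdsWithin] with z hz
    have hz : z ≠ 1 := hz
    have h1 : DifferentiableAt ℂ (fun s : ℂ => ((s - 1) * riemannZeta s) ^ k) z :=
      ((differentiableAt_id.sub_const 1).mul (differentiableAt_riemannZeta hz)).pow k
    refine h1.congr_of_eventuallyEq ?_
    filter_upwards [isOpen_ne.mem_nhds hz] with s hs
    exact Function.update_of_ne hs _ _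
  · rw [zetaPowAux, continuousAt_update_same]
    simpa using riemannZeta_residue_one.pow k

theorem hasSum_re_zetaPowAux (k : ℕ) :
    ∀ᶠ w : ℝ in 𝓝 0, HasSum (fun n : ℕ => w ^ n * (lam k n / n.factorial))
      (zetaPowAux k (1 + w)).re := by
  have h1 := hasFPowerSeriesAt_iff.1 (zetaPowAux_analyticAt k).hasFPowerSeriesAt
  have h2 : Tendsto (fun w : ℝ => (w : ℂ)) (𝓝 0) (𝓝 0) := by
    simpa using Complex.continuous_ofReal.tendsto 0
  filter_upwards [h2.eventually h1] with w hw
  convert! Complex.hasSum_re hw using 2 with n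
  rw [FormalMultilinearSeries.coeff_ofScalars, smul_eq_mul, ← ofReal_pow, re_ofReal_mul,
    ← ofReal_natCast, div_ofReal_re, lam]

theorem hasFPowerSeriesAt_ofScalars {f : ℝ → ℝ} {b : ℕ → ℝ}
    (h : ∀ᶠ w : ℝ in 𝓝 0, HasSum (fun n : ℕ => w ^ n * b n) (f w)) :
    HasFPowerSeriesAt f (FormalMultilinearSeries.ofScalars ℝ b) 0 := by
  rw [hasFPowerSeriesAt_iff]
  simpa [FormalMultilinearSeries.coeff_ofScalars] using h

/-- Power series that agree on a right neighbourhood of `0` have the same coefficients. -/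
theorem coeff_eq_of_eq_right {f g : ℝ → ℝ} {b c : ℕ → ℝ}
    (hf : ∀ᶠ w : ℝ in 𝓝 0, HasSum (fun n : ℕ => w ^ n * b n) (f w))
    (hg : ∀ᶠ w : ℝ in 𝓝 0, HasSum (fun n : ℕ => w ^ n * c n) (g w))
    (hfg : ∀ w, 0 < w → f w = g w) : b = c := by
  have h1 := hasFPowerSeriesAt_ofScalars hf
  have h2 := hasFPowerSeriesAt_ofScalars hg
  have h3 : ∀ᶠ w in 𝓝 0, f w = g w := by
    rw [← AnalyticAt.frequently_eq_iff_eventually_eq h1.analyticAt h2.analyticAt]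
    have h4 : ∀ᶠ w in 𝓝[>] (0 : ℝ), f w = g w :=
      eventually_mem_nhdsWithin.mono fun w hw => hfg w hw
    exact h4.frequently.filter_mono (nhdsWithin_mono _ fun w hw => ne_of_gt hw)
  have h5 := h1.eq_formalMultilinearSeries (h2.congr (h3.mono fun w hw => hw.symm))
  funext n
  have := congrArg (fun p : FormalMultilinearSeries ℝ ℝ ℝ => p.coeff n) h5
  simpa [FormalMultilinearSeries.coeff_ofScalars] using this

theorem hasSum_one_add_mul {b : ℕ → ℝ} {w S : ℝ} (h : HasSum (fun n : ℕ => w ^ n * b n) S) :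
    HasSum (fun n : ℕ => w ^ n * (b n + if n = 0 then 0 else b (n - 1))) ((1 + w) * S) := by
  have h1 : HasSum (fun n : ℕ => w ^ n * if n = 0 then 0 else b (n - 1)) (w * S) := by
    rw [← hasSum_nat_add_iff' 1]
    simpa [pow_succ', mul_assoc] using h.mul_left w
  rw [add_mul, one_mul]
  simpa only [mul_add] using h.add h1

theorem hasSum_prepend {a g : ℕ → ℝ} {k : ℕ} {w S : ℝ} (h : HasSum (fun n : ℕ => w ^ n * g n) S) :
    HasSum (fun n : ℕ => w ^ n * if n < k then a (k - 1 - n) else g (n - k))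
      (w ^ k * S + ∑ j ∈ Finset.range k, a j * w ^ (k - 1 - j)) := by
  rw [← hasSum_nat_add_iff' k]
  have h1 : ∑ n ∈ Finset.range k, w ^ n * (if n < k then a (k - 1 - n) else g (n - k)) =
      ∑ j ∈ Finset.range k, a j * w ^ (k - 1 - j) := by
    rw [← Finset.sum_range_reflect]
    refine Finset.sum_congr rfl fun j hj => ?_
    have hj := Finset.mem_range.1 hj
    rw [if_pos (by omega), show k - 1 - (k - 1 - j) = j by omega, mul_comm]
  rw [h1, add_sub_cancel_right]
  simpa [pow_add, mul_assoc, mul_comm, mul_left_comm] using h.mul_left (w ^ k)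

theorem zetaPowAux_one_add (k : ℕ) {w : ℝ} (hw : 0 < w) :
    (zetaPowAux k (1 + w)).re = w ^ k * (riemannZeta (1 + w) ^ k).re := by
  have h1 : (1 + w : ℂ) ≠ 1 := by simpa using hw.ne'
  rw [zetaPowAux, Function.update_of_ne h1, add_sub_cancel_left, mul_pow, ← ofReal_pow,
    re_ofReal_mul]

/-- The normalized moments `(-1)^j / j! ∫ u^j Δ_k(e^u) e^{-u} du` of the error term. -/
noncomputable def deltaMoment (k j : ℕ) : ℝ :=
  (-1) ^ j / j.factorial * ∫ u, u ^ j * Deltak k (Real.exp u) ∂expWeight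

theorem deltaMoment_relation {k : ℕ}
    (hF : MemLp (fun u => Deltak k (Real.exp u)) 2 expWeight) (n : ℕ) :
    ((if n < k then aCoef k (k - 1 - n) else deltaMoment k (n - k)) +
      if n = 0 then 0 else
        if n - 1 < k then aCoef k (k - 1 - (n - 1)) else deltaMoment k (n - 1 - k)) =
      lam k n / n.factorial := by
  have hnear : ∀ᶠ w : ℝ in 𝓝 0, |w| < 1 / 2 := by
    have := Metric.ball_mem_nhds (0 : ℝ) (ε := 1 / 2) (by norm_num)
    filter_upwards [this] with w hw
    simpa using hw
  refine congrFun (coeff_eq_of_eq_right (hnear.mono fun w hw =>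
    hasSum_one_add_mul (hasSum_prepend (a := aCoef k) (k := k) (hasSum_laplace hF hw)))
    (hasSum_re_zetaPowAux k) fun w hw => ?_) n
  rw [zetaPowAux_one_add k hw, ← laplace_Deltak hF hw]
  have h1 : ∑ j ∈ Finset.range k, aCoef k j * w ^ (k - 1 - j) =
      w ^ k * ∑ j ∈ Finset.range k, aCoef k j / w ^ (j + 1) := by
    rw [Finset.mul_sum]
    refine Finset.sum_congr rfl fun j hj => ?_
    have hj := Finset.mem_range.1 hj
    obtain ⟨d, rfl⟩ := Nat.exists_eq_add_of_lt hj
    rw [show j + d + 1 - 1 - j = d by omega]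
    field_simp
    ring
  rw [h1]
  ring

theorem integral_laguerre_mul {k : ℕ}
    (hF : MemLp (fun u => Deltak k (Real.exp u)) 2 expWeight) (n : ℕ) :
    ∫ u, laguerre n u * Deltak k (Real.exp u) ∂expWeight =
      ∑ j ∈ Finset.range (n + 1), (n.choose j : ℝ) * deltaMoment k j := by
  have hi (j : ℕ) : Integrable (fun u => u ^ j * Deltak k (Real.exp u)) expWeight :=
    (memLp_pow_expWeight j).integrable_mul hF
  simp only [laguerre_eq, Finset.sum_mul, mul_assoc]
  rw [integral_finsetSum _ fun j _ => by simpa only [mul_assoc] using (hi j).const_mul _]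
  refine Finset.sum_congr rfl fun j _ => ?_
  rw [integral_const_mul, deltaMoment]
  ring

theorem sum_succ_choose_mul (n : ℕ) (g : ℕ → ℝ) :
    ∑ j ∈ Finset.range (n + 2), ((n + 1).choose j : ℝ) * g j =
      ∑ j ∈ Finset.range (n + 1), (n.choose j : ℝ) * (g j + g (j + 1)) := by
  have hs (j : ℕ) : ((-1 : ℝ) ^ j) * (-1) ^ j = 1 := by rw [← mul_pow]; simp
  have h := sum_neg_one_pow_choose_mul n fun j => (-1) ^ j * g j
  convert! h using 2 with j _ j _
  · linear_combination (-((n + 1).choose j : ℝ) * g j) * hs j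
  · rw [pow_succ]
    linear_combination (-(n.choose j : ℝ) * (g j + g (j + 1))) * hs j

/-- The Fourier–Laguerre coefficients of the error term. -/
theorem integral_laguerre_mul_Deltak {k : ℕ} (hk : 0 < k)
    (hF : MemLp (fun u => Deltak k (Real.exp u)) 2 expWeight) (n : ℕ) :
    ∫ u, laguerre n u * Deltak k (Real.exp u) ∂expWeight = (-1) ^ n * ell k n := by
  rw [integral_laguerre_mul hF]
  cases n with
  | zero =>
    have h := deltaMoment_relation hF k
    rw [if_neg (lt_irrefl k), if_neg hk.ne', if_pos (by omega), Nat.sub_self, Nat.sub_self] at h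
    obtain ⟨m, rfl⟩ := Nat.exists_eq_succ_of_ne_zero hk.ne'
    have hs : ((-1 : ℝ) ^ m) * (-1) ^ m = 1 := by rw [← mul_pow]; simp
    simp only [aCoef, Nat.succ_eq_add_one, Nat.add_sub_cancel, Nat.sub_zero] at h
    simp only [ell, Nat.cast_zero, zero_add, Finset.sum_range_one, Nat.choose_zero_right,
      Nat.cast_one, one_mul, pow_zero, add_zero, Int.toNat_natCast, neg_zero, Int.toNat_zero,
      Nat.succ_eq_add_one]
    rw [if_neg (by norm_num), Finset.sum_range_succ, pow_succ]
    linear_combination h + (-(lam (m + 1) (m + 1) / (m + 1).factorial)) * hs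
  | succ n =>
    rw [sum_succ_choose_mul, ell, if_pos (by push_cast; omega), Int.toNat_natCast,
      ← mul_assoc, ← mul_pow]
    simp only [neg_mul_neg, mul_one, one_pow, one_mul]
    rw [show Finset.Icc 1 (n + 1) = Finset.Ico 1 (n + 2) by ext; simp; omega,
      Finset.sum_Ico_eq_sum_range]
    refine Finset.sum_congr rfl fun j _ => ?_
    have h := deltaMoment_relation hF (1 + j + k)
    rw [if_neg (by omega), if_neg (by omega), if_neg (by omega),
      show 1 + j + k - k = j + 1 by omega, show 1 + j + k - 1 - k = j by omega] at h
    rw [add_comm (deltaMoment k j), h, Nat.add_sub_cancel, Nat.add_sub_cancel_left, mul_div_assoc]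

theorem stmt13 (k : ℕ) (hk : 0 < k)
    (h : IntegrableOn (fun x : ℝ => (Deltak k x) ^ 2 / x ^ 2) (Set.Ioi 1)) :
    Tendsto (fun N : ℕ => ∫ x in Set.Ioi (1 : ℝ),
        (Deltak k x -
          ∑ n ∈ Finset.range (N + 1), (-1 : ℝ) ^ n * ell k n * laguerre n (Real.log x)) ^ 2
          / x ^ 2)
      atTop (𝓝 0) := by
  have hF := memLp_Deltak_exp h
  refine (tendsto_laguerre_expansion hF).congr fun N => ?_
  have h1 := integral_comp_exp_Ioi (fun x : ℝ => (Deltak k x -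
    ∑ n ∈ Finset.range (N + 1), (-1 : ℝ) ^ n * ell k n * laguerre n (Real.log x)) ^ 2 / x ^ 2) 0
  rw [Real.exp_zero] at h1
  rw [← h1, integral_expWeight]
  refine setIntegral_congr_fun measurableSet_Ioi fun u _ => ?_
  simp only [integral_laguerre_mul_Deltak hk hF, Real.log_exp, smul_eq_mul, Real.exp_neg]
  field_simp
end
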